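/- Let 1 < p, q < ∞, 1 ≤ r, s ≤ 2, and let t > 0 satisfy 1/t ≤ 1/r + 1/s, with (max(r,s) < 2 or t > rs/(r+s)). There exists a constant C such that for every pair of discrete Littlewood–Paley families (f_i)_{i∈ℤ} and (g_j)_{j∈ℤ} and every jump collection (N_k)_{k≥0}, one has ‖ (Σ_{k≥1} |Σ_{N_{k−1}(x) < i < j ≤ N_k(x)} f_i(x) g_j(x)|^t)^{1/t} ‖_{pq/(p+q)} ≤ C ‖(f_i)‖_{p,r} ‖(g_j)‖_{q,s}. (For r = s = 2, p = q, f = g this contains the martingale inequality of Friz and Victoir.) -/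

import Mathlib

open MeasureTheory ENNReal
open scoped NNReal

noncomputable section

/-- A jump collection: a sequence of measurable integer-valued functions on `ℝ`,
nondecreasing in the index. -/
def IsJumpCollection (Nk : ℕ → ℝ → ℤ) : Prop :=
  (∀ k, Measurable (Nk k)) ∧ ∀ (k : ℕ) (x : ℝ), Nk k x ≤ Nk (k + 1) x

/-- The dyadic interval `[m 2^(-i), (m+1) 2^(-i))`. -/
def dyadicInterval (i m : ℤ) : Set ℝ :=
  Set.Ico ((m : ℝ) * (2 : ℝ) ^ (-i)) (((m : ℝ) + 1) * (2 : ℝ) ^ (-i))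

/-- A discrete Littlewood–Paley family: each `f i` is locally integrable, constant on
every dyadic interval of length `2^(-i)`, and has integral zero over every dyadic
interval of length `2^(1-i)`. -/
def IsDiscLPFamily (f : ℤ → ℝ → ℝ) : Prop :=
  (∀ i, LocallyIntegrable (f i)) ∧
  (∀ i m : ℤ, ∀ x ∈ dyadicInterval i m, ∀ y ∈ dyadicInterval i m, f i x = f i y) ∧
  (∀ i m : ℤ, ∫ x in dyadicInterval (i - 1) m, f i x = 0)

/-- The mixed norm `‖(f_i)‖_{p,r} = ‖(∑_i |f_i|^r)^(1/r)‖_{L^p}`. -/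
def mixedNorm (p r : ℝ) (f : ℤ → ℝ → ℝ) : ℝ≥0∞ :=
  (∫⁻ x : ℝ, ((∑' i : ℤ, (ENNReal.ofReal |f i x|) ^ r) ^ (1 / r)) ^ p) ^ (1 / p)

lemma pv_sub_mul_pow (m : ℕ) : ∃ c : ℝ, 0 ≤ c ∧ ∀ U V : ℝ, 0 ≤ U → 0 ≤ V →
    (U - V) * (U ^ (m+1) - V ^ (m+1)) ≤ c * (U - V)^2 * (U ^ m + V ^ m) := by
  induction m with
  | zero => exact ⟨1, by norm_num, fun U V _ _ => by
    have := sq_nonneg (U - V)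
    simp only [pow_zero, zero_add, pow_one]; nlinarith⟩
  | succ m ih =>
    obtain ⟨c, hc, h⟩ := ih
    refine ⟨1 + 2 * c, by positivity, fun U V hU hV => ?_⟩
    have h1 := h U V hU hV
    have e : (U - V) * (U ^ (m+1+1) - V ^ (m+1+1))
        = (U-V)^2 * U^(m+1) + V * ((U - V) * (U ^ (m+1) - V ^ (m+1))) := by ring
    have h2 := mul_le_mul_of_nonneg_left h1 hV
    have h3 : V * (U^m + V^m) ≤ 2 * (U^(m+1) + V^(m+1)) := by
      rcases le_total U V with h | h
      · have : U^m ≤ V^m := pow_le_pow_left₀ hU h m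
        have h5 := mul_le_mul_of_nonneg_left this hV
        have : 0 ≤ U^(m+1) := by positivity
        rw [pow_succ V m]; nlinarith
      · have : V^m ≤ U^m := pow_le_pow_left₀ hV h m
        have h5 := mul_le_mul_of_nonneg_left this hV
        have h6 : V * U^m ≤ U * U^m := mul_le_mul_of_nonneg_right h (by positivity)
        have : 0 ≤ V^(m+1) := by positivity
        rw [pow_succ U m]; nlinarith
    have h4 := mul_le_mul_of_nonneg_left h3 (mul_nonneg hc (sq_nonneg (U - V)))
    have h5 : 0 ≤ (U-V)^2 * V^(m+1) := by positivity
    rw [e]; nlinarith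

lemma pv_two_pt (m : ℕ) : ∃ K : ℝ, 0 < K ∧ ∀ T a : ℝ,
    (T + a) ^ (2*(m+1)) + (T - a) ^ (2*(m+1)) - 2 * T ^ (2*(m+1))
      ≤ K * a^2 * ((T + a)^(2*m) + (T - a)^(2*m)) := by
  induction m with
  | zero => exact ⟨1, by norm_num, fun T a => by ring_nf; rfl⟩
  | succ m ih =>
    obtain ⟨K, hK, h⟩ := ih
    obtain ⟨c, hc, hcc⟩ := pv_sub_mul_pow m
    refine ⟨K + 1 + 8 * c, by positivity, fun T a => ?_⟩
    have h1 := mul_le_mul_of_nonneg_left (h T a) (sq_nonneg T)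
    have h2 := hcc ((T+a)^2) ((T-a)^2) (by positivity) (by positivity)
    simp only [pow_mul] at *
    set U := (T+a)^2 with hU
    set V := (T-a)^2 with hV
    have hU0 : 0 ≤ U := by positivity
    have hV0 : 0 ≤ V := by positivity
    have e1 : U + V = 2 * (T^2 + a^2) := by rw [hU, hV]; ring
    have e2 : (U - V)^2 = 16 * T^2 * a^2 := by rw [hU, hV]; ring
    have h3 : T^2 * (U^m + V^m) ≤ U^(m+1) + V^(m+1) := by
      have ht : T^2 ≤ (U+V)/2 := by nlinarith [sq_nonneg a]
      have hp : 0 ≤ U^m + V^m := by positivity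
      have := mul_le_mul_of_nonneg_right ht hp
      have h7 : 0 ≤ (U - V) * (U^m - V^m) := by
        rcases le_total U V with h | h
        · have : U^m ≤ V^m := pow_le_pow_left₀ hU0 h m
          nlinarith
        · have : V^m ≤ U^m := pow_le_pow_left₀ hV0 h m
          nlinarith
      have e : U^(m+1) + V^(m+1) = (U+V)/2*(U^m+V^m) + (U - V) * (U^m - V^m)/2 := by ring
      linarith
    have e3 : U^(m+1+1) + V^(m+1+1) = (T^2 + a^2) * (U^(m+1) + V^(m+1))
        + (U - V) * (U^(m+1) - V^(m+1)) / 2 := by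
      have : T^2 + a^2 = (U+V)/2 := by linarith
      rw [this]; ring
    rw [e2] at h2
    have h8 := mul_le_mul_of_nonneg_left h3 (mul_nonneg hc (sq_nonneg a))
    have h9 := mul_le_mul_of_nonneg_left h3 (mul_nonneg hK.le (sq_nonneg a))
    have e4 : (T^2)^(m+1+1) = T^2 * (T^2)^(m+1) := by ring
    rw [e3, e4]
    nlinarith

lemma pv_conv (m : ℕ) (T a : ℝ) : 2 * T^(2*m) ≤ (T+a)^(2*m) + (T-a)^(2*m) := by
  have h := (even_two_mul m).convexOn_pow (𝕜 := ℝ)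
  have := h.2 (Set.mem_univ (T+a)) (Set.mem_univ (T-a)) (by norm_num : (0:ℝ) ≤ 1/2)
    (by norm_num : (0:ℝ) ≤ 1/2) (by norm_num)
  simp only [smul_eq_mul] at this
  have e : 1 / 2 * (T + a) + 1 / 2 * (T - a) = T := by ring
  rw [e] at this
  linarith

/-- Burkholder-type inequality for even exponents. -/
lemma pv_burk (M : ℕ) : ∃ C : ℝ≥0, ∀ {Ω : Type} [MeasurableSpace Ω] (μ : Measure Ω)
    (d : ℕ → Ω → ℝ) (σ : ℕ → Ω → Ω) (_ : ∀ n, Measurable (d n))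
    (_ : ∀ n, MeasurePreserving (σ n) μ μ)
    (_ : ∀ n, ∀ i < n, ∀ x, d i (σ n x) = d i x) (_ : ∀ n x, d n (σ n x) = - d n x) (N : ℕ),
    ∫⁻ x, ENNReal.ofReal ((∑ n ∈ Finset.range N, d n x)^(2*(M+1))) ∂μ
      ≤ C * ∫⁻ x, ENNReal.ofReal ((∑ n ∈ Finset.range N, (d n x)^2)^(M+1)) ∂μ := by
  obtain ⟨K, hKpos, hKK⟩ := pv_two_pt M
  have hK := hKpos.le
  refine ⟨Real.toNNReal (2 * (K * (2*K)^M)), ?_⟩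
  intro Ω _ μ d σ hd hσ hinv hflip N
  set T : ℕ → Ω → ℝ := fun n x => ∑ i ∈ Finset.range n, d i x with hT
  set V : ℕ → Ω → ℝ := fun n x => ∑ i ∈ Finset.range n, (d i x)^2 with hV
  have hTm : ∀ n, Measurable (T n) := fun n => by
    apply Finset.measurable_sum; intro i _; exact hd i
  have hVm : ∀ n, Measurable (V n) := fun n => by
    apply Finset.measurable_sum; intro i _; exact (hd i).pow_const 2
  have hV0 : ∀ n x, 0 ≤ V n x := fun n x => Finset.sum_nonneg (fun i _ => sq_nonneg _)
  have hTV : ∀ n x, (T n x)^2 ≤ n * V n x := fun n x => by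
    have := sq_sum_le_card_mul_sum_sq (s := Finset.range n) (f := fun i => d i x)
    simpa using this
  have hVmono : ∀ n x, n ≤ N → V n x ≤ V N x := fun n x hn =>
    Finset.sum_le_sum_of_subset_of_nonneg (Finset.range_mono hn) (fun i _ _ => sq_nonneg _)
  by_cases hfin : ∫⁻ x, ENNReal.ofReal ((V N x)^(M+1)) ∂μ = ∞
  · rw [show (∫⁻ x, ENNReal.ofReal ((∑ n ∈ Finset.range N, (d n x)^2)^(M+1)) ∂μ) = ∞ from hfin,
      ENNReal.mul_top (by
        rw [ENNReal.coe_ne_zero]; exact (Real.toNNReal_pos.2 (by positivity)).ne')]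
    exact le_top
  have hVint : Integrable (fun x => (V N x)^(M+1)) μ := by
    refine ⟨((hVm N).pow_const _).aestronglyMeasurable, ?_⟩
    rw [hasFiniteIntegral_iff_ofReal (Filter.Eventually.of_forall fun x => pow_nonneg (hV0 N x) _)]
    exact lt_top_iff_ne_top.2 hfin
  have hTint : ∀ n ≤ N, Integrable (fun x => (T n x)^(2*(M+1))) μ := fun n hn => by
    refine (hVint.const_mul ((n:ℝ)^(M+1))).mono' ((hTm n).pow_const _).aestronglyMeasurable
      (Filter.Eventually.of_forall fun x => ?_)
    rw [Real.norm_of_nonneg (by rw [pow_mul]; positivity), pow_mul, ← mul_pow]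
    refine pow_le_pow_left₀ (sq_nonneg _) ((hTV n x).trans ?_) _
    exact mul_le_mul_of_nonneg_left (hVmono n x hn) (by positivity)
  have hTVint : ∀ n ≤ N, Integrable (fun x => (T n x)^(2*M) * V n x) μ := fun n hn => by
    refine (hVint.const_mul ((n:ℝ)^M)).mono'
      (((hTm n).pow_const _).mul (hVm n)).aestronglyMeasurable
      (Filter.Eventually.of_forall fun x => ?_)
    rw [Real.norm_of_nonneg (mul_nonneg (by rw [pow_mul]; positivity) (hV0 n x)), pow_mul,
      pow_succ (V N x), ← mul_assoc, ← mul_pow]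
    refine mul_le_mul (pow_le_pow_left₀ (sq_nonneg _) ((hTV n x).trans ?_) _) (hVmono n x hn)
      (hV0 n x) (pow_nonneg (mul_nonneg (by positivity) (hV0 N x)) _)
    exact mul_le_mul_of_nonneg_left (hVmono n x hn) (by positivity)
  set Φ : ℕ → Ω → ℝ := fun n x => (T n x)^(2*(M+1)) - K * ((T n x)^(2*M) * V n x) with hΦ
  have hΦm : ∀ n, Measurable (Φ n) := fun n =>
    ((hTm n).pow_const _).sub ((((hTm n).pow_const _).mul (hVm n)).const_mul K)
  have hΦint : ∀ n ≤ N, Integrable (Φ n) μ := fun n hn =>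
    (hTint n hn).sub ((hTVint n hn).const_mul K)
  have hstep : ∀ n, n + 1 ≤ N → ∫ x, Φ (n+1) x ∂μ ≤ ∫ x, Φ n x ∂μ := fun n hn => by
    have e : ∫ x, Φ (n+1) (σ n x) ∂μ = ∫ x, Φ (n+1) x ∂μ := by
      conv_rhs => rw [← (hσ n).map_eq]
      rw [integral_map (hσ n).measurable.aemeasurable (hΦm _).aestronglyMeasurable]
    have hi2 : Integrable (fun x => Φ (n+1) (σ n x)) μ :=
      (hσ n).integrable_comp_of_integrable (hΦint _ hn)
    have hpt : ∀ x, Φ (n+1) x + Φ (n+1) (σ n x) ≤ 2 * Φ n x := fun x => by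
      have t1 : T (n+1) x = T n x + d n x := Finset.sum_range_succ _ _
      have v1 : V (n+1) x = V n x + (d n x)^2 := Finset.sum_range_succ _ _
      have t0 : T n (σ n x) = T n x := Finset.sum_congr rfl fun i hi =>
        hinv n i (Finset.mem_range.1 hi) x
      have v0 : V n (σ n x) = V n x := Finset.sum_congr rfl fun i hi => by
        rw [hinv n i (Finset.mem_range.1 hi) x]
      have t2 : T (n+1) (σ n x) = T n x - d n x := by
        rw [show T (n+1) (σ n x) = T n (σ n x) + d n (σ n x) from Finset.sum_range_succ _ _,
          t0, hflip]; ring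
      have v2 : V (n+1) (σ n x) = V n x + (d n x)^2 := by
        rw [show V (n+1) (σ n x) = V n (σ n x) + (d n (σ n x))^2 from Finset.sum_range_succ _ _,
          v0, hflip]; ring
      simp only [hΦ]
      rw [t1, v1, t2, v2]
      have h1 := hKK (T n x) (d n x)
      have h2 := mul_le_mul_of_nonneg_left (pv_conv M (T n x) (d n x)) (mul_nonneg hK (hV0 n x))
      nlinarith
    have := integral_mono ((hΦint _ hn).add hi2) ((hΦint n (by omega)).const_mul 2) hpt
    rw [integral_const_mul] at this
    have h3 : ∫ x, (Φ (n+1) + fun x => Φ (n+1) (σ n x)) x ∂μ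
        = ∫ x, Φ (n+1) x ∂μ + ∫ x, Φ (n+1) (σ n x) ∂μ := integral_add (hΦint _ hn) hi2
    rw [h3, e] at this
    linarith
  have hle : ∀ n, n ≤ N → ∫ x, Φ n x ∂μ ≤ 0 := by
    intro n
    induction n with
    | zero => intro _; simp [hΦ, hT, hV]
    | succ n ih => intro hn; exact (hstep n hn).trans (ih (by omega))
  have hpt : ∀ x, (T N x)^(2*(M+1)) ≤ 2 * Φ N x + 2 * (K * (2*K)^M) * (V N x)^(M+1) := fun x => by
    simp only [hΦ, pow_mul]
    set y := (T N x)^2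
    have hy : 0 ≤ y := sq_nonneg _
    have hv := hV0 N x
    set v := V N x
    have : K * (y^M * v) ≤ y^(M+1)/2 + (K * (2*K)^M) * v^(M+1) := by
      rcases le_total (2*K*v) y with h | h
      · have : 0 ≤ (K * (2*K)^M) * v^(M+1) := by positivity
        have h2 := mul_le_mul_of_nonneg_left h (pow_nonneg hy M)
        rw [pow_succ]; nlinarith
      · have h2 : y^M ≤ (2*K*v)^M := pow_le_pow_left₀ hy h M
        have h3 := mul_le_mul_of_nonneg_left h2 (mul_nonneg hK hv)
        have : 0 ≤ y^(M+1) := by positivity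
        rw [mul_pow] at h3
        rw [pow_succ v]; nlinarith
    linarith
  have hI : ∫ x, (T N x)^(2*(M+1)) ∂μ ≤ 2 * (K * (2*K)^M) * ∫ x, (V N x)^(M+1) ∂μ := by
    have h1 := integral_mono (hTint N le_rfl) (((hΦint N le_rfl).const_mul 2).add
      (hVint.const_mul (2 * (K * (2*K)^M)))) hpt
    have h3 : ∫ x, ((fun x => 2 * Φ N x) + fun x => 2 * (K * (2*K)^M) * (V N x)^(M+1)) x ∂μ
        = 2 * ∫ x, Φ N x ∂μ + 2 * (K * (2*K)^M) * ∫ x, (V N x)^(M+1) ∂μ := by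
      rw [← integral_const_mul, ← integral_const_mul]
      exact integral_add ((hΦint N le_rfl).const_mul 2) (hVint.const_mul _)
    rw [h3] at h1
    have := hle N le_rfl
    linarith
  rw [← ofReal_integral_eq_lintegral_ofReal (hTint N le_rfl)
      (Filter.Eventually.of_forall fun x => by simp only [pow_mul]; positivity),
    ← ofReal_integral_eq_lintegral_ofReal hVint
      (Filter.Eventually.of_forall fun x => pow_nonneg (hV0 N x) _)]
  change _ ≤ ENNReal.ofReal (2 * (K * (2*K)^M)) * _
  rw [← ENNReal.ofReal_mul (by positivity)]
  exact ENNReal.ofReal_le_ofReal hI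

/-- No stopping occurs when the increment `(x, y)` is added to the state `S`. -/
def pvGood (S : ℝ × ℝ × ℝ) (x y : ℝ) : Prop :=
  |x| ≤ 1 ∧ |y| ≤ 1 ∧ |S.1 + x| ≤ 1 ∧ |S.2.1 + y| ≤ 1 ∧ |S.2.2 + S.1 * y| ≤ 1

open Classical in
/-- State update. -/
def pvNxt (S : ℝ × ℝ × ℝ) (x y : ℝ) : ℝ × ℝ × ℝ :=
  if pvGood S x y then (S.1 + x, S.2.1 + y, S.2.2 + S.1 * y) else (0, 0, 0)

/-- State of the machine at time `n`. -/
def pvSt (x y : ℕ → ℝ) : ℕ → ℝ × ℝ × ℝ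
  | 0 => (0, 0, 0)
  | n + 1 => pvNxt (pvSt x y n) (x n) (y n)

open Classical in
/-- Number of stops before time `N`. -/
def pvCnt (x y : ℕ → ℝ) (N : ℕ) : ℕ :=
  ∑ n ∈ Finset.range N, if pvGood (pvSt x y n) (x n) (y n) then 0 else 1

open Classical in
/-- Martingale increments. -/
def pvInc (S : ℝ × ℝ × ℝ) (x y : ℝ) : ℝ :=
  if |x| ≤ 1 ∧ |y| ≤ 1 then 2 * S.1 * x + 2 * (S.2.1 + S.2.2 * S.1) * y else 0

lemma pvSt_bdd (x y : ℕ → ℝ) (n : ℕ) :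
    |(pvSt x y n).1| ≤ 1 ∧ |(pvSt x y n).2.1| ≤ 1 ∧ |(pvSt x y n).2.2| ≤ 1 := by
  cases n with
  | zero => simp [pvSt]
  | succ n =>
    simp only [pvSt, pvNxt]
    split_ifs with h
    · exact h.2.2
    · simp

lemma pvInc_bound (S : ℝ × ℝ × ℝ) (h1 : |S.1| ≤ 1) (h2 : |S.2.1| ≤ 1) (h3 : |S.2.2| ≤ 1)
    (x y : ℝ) : |pvInc S x y| ≤ 4 * min 1 |x| + 4 * min 1 |y| := by
  unfold pvInc
  split_ifs with h
  · rw [min_eq_right h.1, min_eq_right h.2]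
    have e1 : |2 * S.1 * x| ≤ 4 * |x| := by
      rw [abs_mul, abs_mul, abs_two]
      nlinarith [abs_nonneg x]
    have e2 : |2 * (S.2.1 + S.2.2 * S.1) * y| ≤ 4 * |y| := by
      rw [abs_mul, abs_mul, abs_two]
      have h4 : |S.2.1 + S.2.2 * S.1| ≤ 2 := by
        refine (abs_add_le _ _).trans ?_
        rw [abs_mul]
        nlinarith [abs_nonneg S.2.2, abs_nonneg S.1]
      nlinarith [abs_nonneg y]
    exact (abs_add_le _ _).trans (add_le_add e1 e2)
  · simp only [abs_zero]; positivity

lemma pvInc_neg (S : ℝ × ℝ × ℝ) (x y : ℝ) : pvInc S (-x) (-y) = - pvInc S x y := by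
  unfold pvInc
  simp only [abs_neg]
  split_ifs
  · ring
  · simp

/-- Energy of a state. -/
def pvE (S : ℝ × ℝ × ℝ) : ℝ := S.1^2 + S.2.1^2 + S.2.2^2

open Classical in
lemma pv_step (S : ℝ × ℝ × ℝ) (h1 : |S.1| ≤ 1) (x y : ℝ) :
    (((if pvGood S x y then 0 else 1 : ℕ) : ℝ)) + pvE (pvNxt S x y) ≤
      pvE S + (min 1 (x^2) + 2 * min 1 (y^2)) + pvInc S x y := by
  obtain ⟨a, b, w⟩ := S
  simp only at h1
  have ha : a^2 ≤ 1 := (sq_le_one_iff_abs_le_one a).2 h1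
  by_cases hs : |x| ≤ 1 ∧ |y| ≤ 1
  · have hx : x^2 ≤ 1 := (sq_le_one_iff_abs_le_one x).2 hs.1
    have hy : y^2 ≤ 1 := (sq_le_one_iff_abs_le_one y).2 hs.2
    have hinc : pvInc (a,b,w) x y = 2 * a * x + 2 * (b + w * a) * y := by simp [pvInc, hs]
    rw [hinc, min_eq_right hx, min_eq_right hy]
    have key : (a+x)^2 + (b+y)^2 + (w+a*y)^2 ≤
        pvE (a,b,w) + (x^2+2*y^2) + (2 * a * x + 2 * (b + w * a) * y) := by
      simp only [pvE]
      nlinarith [mul_le_mul_of_nonneg_right ha (sq_nonneg y)]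
    by_cases hg : pvGood (a,b,w) x y
    · rw [if_pos hg]
      simp only [pvNxt, if_pos hg]
      refine le_trans ?_ key
      simp [pvE]
    · rw [if_neg hg]
      simp only [pvNxt, if_neg hg]
      refine le_trans ?_ key
      simp only [pvE, Nat.cast_one]
      have : 1 < |a+x| ∨ 1 < |b+y| ∨ 1 < |w+a*y| := by
        by_contra hcon
        push Not at hcon
        exact hg ⟨hs.1, hs.2, hcon⟩
      rcases this with h | h | h
      · have := (one_lt_sq_iff_one_lt_abs _).2 h
        nlinarith [sq_nonneg (b+y), sq_nonneg (w+a*y)]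
      · have := (one_lt_sq_iff_one_lt_abs _).2 h
        nlinarith [sq_nonneg (a+x), sq_nonneg (w+a*y)]
      · have := (one_lt_sq_iff_one_lt_abs _).2 h
        nlinarith [sq_nonneg (b+y), sq_nonneg (a+x)]
  · have hg : ¬ pvGood (a,b,w) x y := fun h => hs ⟨h.1, h.2.1⟩
    have hinc : pvInc (a,b,w) x y = 0 := by simp only [pvInc, if_neg hs]
    rw [hinc, if_neg hg]
    simp only [pvNxt, if_neg hg]
    have hE : 0 ≤ pvE (a,b,w) := by simp only [pvE]; positivity
    have hE0 : pvE (0,0,0) = 0 := by simp [pvE]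
    have hmx : 0 ≤ min 1 (x^2) := by positivity
    have hmy : 0 ≤ min 1 (y^2) := by positivity
    rw [hE0, Nat.cast_one]
    by_cases hx : |x| ≤ 1
    · have hy : 1 < |y| := by
        by_contra h; exact hs ⟨hx, not_lt.1 h⟩
      rw [min_eq_left ((one_lt_sq_iff_one_lt_abs _).2 hy).le]
      linarith
    · rw [min_eq_left ((one_lt_sq_iff_one_lt_abs x).2 (not_le.1 hx)).le]
      linarith

lemma pv_energy (x y : ℕ → ℝ) (N : ℕ) :
    (pvCnt x y N : ℝ) + pvE (pvSt x y N) ≤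
      ∑ n ∈ Finset.range N, (min 1 ((x n)^2) + 2 * min 1 ((y n)^2))
      + ∑ n ∈ Finset.range N, pvInc (pvSt x y n) (x n) (y n) := by
  induction N with
  | zero => simp [pvCnt, pvE, pvSt]
  | succ N ih =>
    have h := pv_step (pvSt x y N) (pvSt_bdd x y N).1 (x N) (y N)
    rw [Finset.sum_range_succ, Finset.sum_range_succ]
    have e : pvCnt x y (N+1) = pvCnt x y N + _ := Finset.sum_range_succ _ _
    rw [e]
    push_cast at h ⊢
    simp only [pvSt]
    linarith

lemma pvCnt_mono (x y : ℕ → ℝ) : Monotone (pvCnt x y) := by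
  intro m n h
  exact Finset.sum_le_sum_of_subset (Finset.range_mono h)

lemma pv_good_of_cnt (x y : ℕ → ℝ) {m n : ℕ} (hc : pvCnt x y m = pvCnt x y n)
    {j : ℕ} (h1 : m ≤ j) (h2 : j < n) : pvGood (pvSt x y j) (x j) (y j) := by
  have a := pvCnt_mono x y h1
  have b := pvCnt_mono x y (Nat.succ_le_of_lt h2)
  have e : pvCnt x y (j+1) = pvCnt x y j + _ := Finset.sum_range_succ _ _
  by_contra hg
  rw [if_neg hg] at e
  simp only [Nat.succ_eq_add_one] at b
  omega

lemma pv_block_aux (x y : ℕ → ℝ) (m n : ℕ) (hmn : m ≤ n)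
    (hg : ∀ j, m ≤ j → j < n → pvGood (pvSt x y j) (x j) (y j)) :
    (pvSt x y n).1 = (pvSt x y m).1 + ∑ i ∈ Finset.Ico m n, x i ∧
    (pvSt x y n).2.1 = (pvSt x y m).2.1 + ∑ i ∈ Finset.Ico m n, y i ∧
    (pvSt x y n).2.2 = (pvSt x y m).2.2 + (pvSt x y m).1 * ∑ i ∈ Finset.Ico m n, y i
      + ∑ j ∈ Finset.Ico m n, ∑ i ∈ Finset.Ico m j, x i * y j := by
  induction n, hmn using Nat.le_induction with
  | base => simp
  | succ n hmn ih =>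
    obtain ⟨i1, i2, i3⟩ := ih (fun j h1 h2 => hg j h1 (by omega))
    have h := hg n hmn (by omega)
    simp only [pvSt, pvNxt, if_pos h, Finset.sum_Ico_succ_top hmn, i1, i2, i3]
    refine ⟨by ring, by ring, ?_⟩
    rw [← Finset.sum_mul]; ring

lemma pv_block (x y : ℕ → ℝ) {m n : ℕ} (hmn : m ≤ n) (hc : pvCnt x y m = pvCnt x y n) :
    |∑ j ∈ Finset.Ico m n, ∑ i ∈ Finset.Ico m j, x i * y j| ≤ 4 := by
  obtain ⟨i1, i2, i3⟩ := pv_block_aux x y m n hmn (fun j h1 h2 => pv_good_of_cnt x y hc h1 h2)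
  obtain ⟨a1, a2, a3⟩ := pvSt_bdd x y m
  obtain ⟨b1, b2, b3⟩ := pvSt_bdd x y n
  have e : ∑ j ∈ Finset.Ico m n, ∑ i ∈ Finset.Ico m j, x i * y j =
    ((pvSt x y n).2.2 - (pvSt x y m).2.2)
      - (pvSt x y m).1 * ((pvSt x y n).2.1 - (pvSt x y m).2.1) := by
    rw [i3, i2]; ring
  rw [e]
  refine (abs_sub _ _).trans ?_
  have h1 := abs_sub (pvSt x y n).2.2 (pvSt x y m).2.2
  have h2 := abs_sub (pvSt x y n).2.1 (pvSt x y m).2.1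
  rw [abs_mul]
  nlinarith [abs_nonneg (pvSt x y m).1, abs_nonneg ((pvSt x y n).2.1 - (pvSt x y m).2.1)]

open Classical in
lemma pv_count (x y : ℕ → ℝ) (nk : ℕ → ℕ) (hnk : ∀ k, nk k ≤ nk (k+1)) (K : ℕ) :
    ∑ k ∈ Finset.range K, (if 4 < |∑ j ∈ Finset.Ico (nk k) (nk (k+1)),
      ∑ i ∈ Finset.Ico (nk k) j, x i * y j| then 1 else 0) ≤ pvCnt x y (nk K) := by
  induction K with
  | zero => simp
  | succ K ih =>
    rw [Finset.sum_range_succ]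
    have hm := pvCnt_mono x y (hnk K)
    split_ifs with h
    · have : pvCnt x y (nk K) ≠ pvCnt x y (nk (K+1)) := fun hc =>
        absurd h (not_lt.2 (pv_block x y (hnk K) hc))
      omega
    · omega

lemma pvSt_congr (x y x' y' : ℕ → ℝ) (n : ℕ) (hx : ∀ i < n, x i = x' i) (hy : ∀ i < n, y i = y' i) :
    pvSt x y n = pvSt x' y' n := by
  induction n with
  | zero => rfl
  | succ n ih =>
    simp only [pvSt]
    rw [ih (fun i hi => hx i (by omega)) (fun i hi => hy i (by omega)), hx n (by omega),
      hy n (by omega)]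

lemma pvSt_meas {Ω : Type} [MeasurableSpace Ω] (x y : ℕ → Ω → ℝ) (hx : ∀ n, Measurable (x n))
    (hy : ∀ n, Measurable (y n)) (n : ℕ) :
    Measurable (fun ω => pvSt (fun i => x i ω) (fun i => y i ω) n) := by
  induction n with
  | zero => exact measurable_const
  | succ n ih =>
    simp only [pvSt, pvNxt]
    have hx := hx n
    have hy := hy n
    refine Measurable.ite ?_ (by fun_prop) measurable_const
    have c : ∀ {h : Ω → ℝ}, Measurable h → MeasurableSet {ω | |h ω| ≤ 1} := fun hh =>
      measurableSet_le (by fun_prop) measurable_const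
    exact (c hx).inter ((c hy).inter ((c (by fun_prop)).inter ((c (by fun_prop)).inter
      (c (by fun_prop)))))

lemma pvInc_meas {Ω : Type} [MeasurableSpace Ω] (x y : ℕ → Ω → ℝ) (hx : ∀ n, Measurable (x n))
    (hy : ∀ n, Measurable (y n)) (n : ℕ) :
    Measurable (fun ω => pvInc (pvSt (fun i => x i ω) (fun i => y i ω) n) (x n ω) (y n ω)) := by
  have h := pvSt_meas x y hx hy n
  have hx := hx n
  have hy := hy n
  unfold pvInc
  refine Measurable.ite ?_ (by fun_prop) measurable_const
  have c : ∀ {h : Ω → ℝ}, Measurable h → MeasurableSet {ω | |h ω| ≤ 1} := fun hh =>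
    measurableSet_le (by fun_prop) measurable_const
  exact (c hx).inter (c hy)

lemma pv_geo_int (ρ : ℝ) (h0 : 0 ≤ ρ) (h1 : ρ < 1) : Summable (fun m : ℤ => ρ ^ m.natAbs) := by
  rw [summable_int_iff_summable_nat_and_neg]
  simp only [Int.natAbs_natCast, Int.natAbs_neg]
  exact ⟨summable_geometric_of_lt_one h0 h1, summable_geometric_of_lt_one h0 h1⟩

lemma pv_geo (a b δ : ℝ) (ha : 0 < a) (hab : a < b) (hδ : 0 < δ) : ∃ C : ℝ, 0 < C ∧
    ∀ x : ℝ, 0 ≤ x → ∀ S : Finset ℤ,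
      ∑ n ∈ S, ((2:ℝ) ^ (δ * n)) ^ a * (min 1 (x / (2:ℝ) ^ (δ * n))) ^ b ≤ C * x ^ a := by
  set ε := δ * min a (b - a) with hε
  have hεpos : 0 < ε := mul_pos hδ (lt_min ha (by linarith))
  set ρ : ℝ := (2:ℝ) ^ (-ε) with hρ
  have hρ0 : 0 < ρ := by positivity
  have hρ1 : ρ < 1 := Real.rpow_lt_one_of_one_lt_of_neg (by norm_num) (by linarith)
  have hs := pv_geo_int ρ hρ0.le hρ1
  set Z := ∑' m : ℤ, ρ ^ m.natAbs with hZ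
  have hZ0 : 0 < Z := by
    refine hs.tsum_pos (fun i => by positivity) 0 (by simp)
  refine ⟨(2:ℝ) ^ ε * Z, by positivity, fun x hx S => ?_⟩
  rcases hx.eq_or_lt with rfl | hx
  · have : ∀ n ∈ S, ((2:ℝ) ^ (δ * n)) ^ a * (min 1 (0 / (2:ℝ) ^ (δ * n))) ^ b = 0 := fun n _ => by
      rw [zero_div, min_eq_right zero_le_one, Real.zero_rpow (by linarith), mul_zero]
    rw [Finset.sum_eq_zero this, Real.zero_rpow ha.ne']; simp
  set c := Real.logb 2 x / δ with hc
  have hxc : x = (2:ℝ) ^ (δ * c) := by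
    rw [hc, mul_div_cancel₀ _ hδ.ne', Real.rpow_logb (by norm_num) (by norm_num) hx]
  have hterm : ∀ n : ℤ, ((2:ℝ) ^ (δ * n)) ^ a * (min 1 (x / (2:ℝ) ^ (δ * n))) ^ b
      ≤ x ^ a * ((2:ℝ) ^ ε * ρ ^ (n - ⌊c⌋).natAbs) := fun n => by
    have hfl := Int.floor_le c
    have hfl2 := Int.lt_floor_add_one c
    have hn : (((n - ⌊c⌋).natAbs : ℕ) : ℝ) = |(n:ℝ) - ⌊c⌋| := by
      rw [Nat.cast_natAbs]; push_cast; rfl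
    have hrhs : (2:ℝ) ^ (-(ε * |c - n|)) ≤ (2:ℝ) ^ ε * ρ ^ (n - ⌊c⌋).natAbs := by
      rw [← Real.rpow_natCast ρ, hρ, ← Real.rpow_mul (by norm_num), ← Real.rpow_add (by norm_num)]
      apply Real.rpow_le_rpow_of_exponent_le (by norm_num)
      rw [hn]
      have : |(n:ℝ) - ⌊c⌋| ≤ |c - n| + 1 := by
        have h1 : (n:ℝ) - ⌊c⌋ = -(c - n) + (c - ⌊c⌋) := by ring
        rw [h1]
        refine (abs_add_le _ _).trans ?_
        rw [abs_neg, abs_of_nonneg (by linarith : (0:ℝ) ≤ c - ⌊c⌋)]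
        linarith
      nlinarith
    refine le_trans ?_ (mul_le_mul_of_nonneg_left hrhs (by positivity))
    have hq : x / (2:ℝ) ^ (δ * n) = (2:ℝ) ^ (δ * (c - n)) := by
      rw [mul_sub, Real.rpow_sub (by norm_num), ← hxc]
    have hm1 := min_le_left a (b - a)
    have hm2 := min_le_right a (b - a)
    rw [hq, ← Real.rpow_mul (by norm_num)]
    rw [show x ^ a = (2:ℝ) ^ (δ * c * a) by
      conv_lhs => rw [hxc]
      rw [← Real.rpow_mul (by norm_num)]]
    rcases le_total c n with h | h
    · rw [min_eq_right (Real.rpow_le_one_of_one_le_of_nonpos (by norm_num)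
        (mul_nonpos_of_nonneg_of_nonpos hδ.le (by linarith))), ← Real.rpow_mul (by norm_num),
        ← Real.rpow_add (by norm_num), ← Real.rpow_add (by norm_num)]
      apply Real.rpow_le_rpow_of_exponent_le (by norm_num)
      rw [abs_of_nonpos (by linarith), hε]
      have : 0 ≤ δ * (n - c) := mul_nonneg hδ.le (by linarith)
      nlinarith
    · rw [min_eq_left (Real.one_le_rpow (by norm_num) (mul_nonneg hδ.le (by linarith))),
        Real.one_rpow, mul_one, ← Real.rpow_add (by norm_num)]
      apply Real.rpow_le_rpow_of_exponent_le (by norm_num)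
      rw [abs_of_nonneg (by linarith), hε]
      have : 0 ≤ δ * (c - n) := mul_nonneg hδ.le (by linarith)
      nlinarith
  refine (Finset.sum_le_sum fun n _ => hterm n).trans ?_
  rw [← Finset.mul_sum, ← Finset.mul_sum]
  have hs2 : Summable (fun n : ℤ => ρ ^ (n - ⌊c⌋).natAbs) :=
    hs.comp_injective (Equiv.subRight ⌊c⌋).injective
  have hZ2 : ∑' n : ℤ, ρ ^ (n - ⌊c⌋).natAbs = Z :=
    (Equiv.subRight ⌊c⌋).tsum_eq (fun m : ℤ => ρ ^ m.natAbs)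
  have h3 := hs2.sum_le_tsum S (fun i _ => by positivity)
  rw [hZ2] at h3
  rw [mul_comm]
  exact mul_le_mul_of_nonneg_right (mul_le_mul_of_nonneg_left h3 (by positivity)) (by positivity)

lemma pv_geo_nat (ε : ℝ) (hε : 0 < ε) : ∃ C : ℝ, 0 < C ∧ ∀ L : ℕ,
    ∑ l ∈ Finset.range L, (2:ℝ) ^ (-(ε * l)) ≤ C := by
  set ρ : ℝ := (2:ℝ) ^ (-ε) with hρ
  have hρ0 : 0 < ρ := by positivity
  have hρ1 : ρ < 1 := Real.rpow_lt_one_of_one_lt_of_neg (by norm_num) (by linarith)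
  have hs := summable_geometric_of_lt_one hρ0.le hρ1
  refine ⟨∑' l : ℕ, ρ ^ l, hs.tsum_pos (fun i => by positivity) 0 (by simp), fun L => ?_⟩
  have : ∀ l : ℕ, (2:ℝ) ^ (-(ε * l)) = ρ ^ l := fun l => by
    rw [← Real.rpow_natCast ρ, hρ, ← Real.rpow_mul (by norm_num)]; ring_nf
  simp only [this]
  exact hs.sum_le_tsum _ (fun i _ => by positivity)

lemma pv_min_le (y κ : ℝ) (hy : 0 ≤ y) (h0 : 0 < κ) (h1 : κ ≤ 1) : min 1 y ≤ y ^ κ := by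
  rcases le_total y 1 with h | h
  · rw [min_eq_right h]
    rcases hy.eq_or_lt with rfl | hy
    · rw [Real.zero_rpow h0.ne']
    · exact Real.self_le_rpow_of_le_one hy.le h h1
  · rw [min_eq_left h]; exact Real.one_le_rpow h h0.le

/-- bound of the sum over scales of martingale coefficients -/
lemma pv_sumT (θ r t : ℝ) (hθ : 0 < θ) (hr : 0 < r) (hr2 : r ≤ 2) (ht : θ * r ≤ t) :
    ∃ C : ℝ, 0 < C ∧ ∀ x : ℝ, 0 ≤ x → ∀ L : ℕ,
      (∑ l ∈ Finset.range L, (2:ℝ) ^ (-(t * l)) * min 1 (x / (2:ℝ) ^ (-(θ * l))))^2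
        ≤ C * x ^ r := by
  obtain ⟨C, hC, h⟩ := pv_geo_nat (t - θ * r / 2) (by nlinarith [mul_pos hθ hr])
  refine ⟨C^2, by positivity, fun x hx L => ?_⟩
  have h1 : ∑ l ∈ Finset.range L, (2:ℝ) ^ (-(t * l)) * min 1 (x / (2:ℝ) ^ (-(θ * l)))
      ≤ C * x ^ (r/2) := by
    refine le_trans ?_ (mul_le_mul_of_nonneg_right (h L) (by positivity))
    rw [Finset.sum_mul]
    refine Finset.sum_le_sum fun l _ => ?_
    have := pv_min_le (x / (2:ℝ) ^ (-(θ * l))) (r/2) (by positivity) (by linarith) (by linarith)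
    refine (mul_le_mul_of_nonneg_left this (by positivity)).trans (le_of_eq ?_)
    rw [Real.div_rpow hx (by positivity), ← Real.rpow_mul (by norm_num), mul_div_assoc',
      mul_comm _ (x ^ _), mul_div_assoc, ← Real.rpow_sub (by norm_num), mul_comm]
    congr 2; ring
  have h0 : 0 ≤ ∑ l ∈ Finset.range L, (2:ℝ) ^ (-(t * l)) * min 1 (x / (2:ℝ) ^ (-(θ * l))) :=
    Finset.sum_nonneg fun l _ => by positivity
  refine (pow_le_pow_left₀ h0 h1 2).trans (le_of_eq ?_)
  rw [mul_pow, ← Real.rpow_natCast (x ^ _), ← Real.rpow_mul hx]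
  norm_num

/-- bound of the sum over scales of truncated squares -/
lemma pv_sumX (θ r t : ℝ) (hθ : 0 < θ) (hr : 0 < r) (hr2 : r ≤ 2)
    (ht : θ * r < t ∨ (t = θ * r ∧ r < 2)) :
    ∃ C : ℝ, 0 < C ∧ ∀ x : ℝ, 0 ≤ x → ∀ L : ℕ,
      ∑ l ∈ Finset.range L, (2:ℝ) ^ (-(t * l)) * min 1 ((x / (2:ℝ) ^ (-(θ * l)))^2)
        ≤ C * x ^ r := by
  rcases ht with ht | ⟨ht, hlt⟩
  · obtain ⟨C, hC, h⟩ := pv_geo_nat (t - θ * r) (by linarith)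
    refine ⟨C, hC, fun x hx L => ?_⟩
    refine le_trans ?_ (mul_le_mul_of_nonneg_right (h L) (by positivity))
    rw [Finset.sum_mul]
    refine Finset.sum_le_sum fun l _ => ?_
    have := pv_min_le ((x / (2:ℝ) ^ (-(θ * l)))^2) (r/2) (by positivity) (by linarith) (by linarith)
    refine (mul_le_mul_of_nonneg_left this (by positivity)).trans (le_of_eq ?_)
    rw [← Real.rpow_natCast (x / _), ← Real.rpow_mul (by positivity),
      Real.div_rpow hx (by positivity), ← Real.rpow_mul (by norm_num), mul_div_assoc',
      mul_comm _ (x ^ _), mul_div_assoc, ← Real.rpow_sub (by norm_num), mul_comm]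
    congr 2 <;> push_cast <;> ring
  · obtain ⟨C, hC, h⟩ := pv_geo r 2 θ hr hlt hθ
    refine ⟨C, hC, fun x hx L => ?_⟩
    have hinj : Function.Injective (fun l : ℕ => -(l:ℤ)) := fun a b h => by simpa using h
    have := h x hx ((Finset.range L).image (fun l : ℕ => -(l:ℤ)))
    rw [Finset.sum_image (fun a _ b _ hab => hinj hab)] at this
    refine le_trans (le_of_eq (Finset.sum_congr rfl fun l _ => ?_)) this
    push_cast
    rw [← Real.rpow_mul (by norm_num), mul_neg, ht]
    congr 1
    · congr 1; ring
    · rw [Real.rpow_two]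
      rcases le_total 1 (x / (2:ℝ) ^ (-(θ * l))) with h | h
      · rw [min_eq_left h, min_eq_left (one_le_pow₀ h)]; norm_num
      · rw [min_eq_right h, min_eq_right (pow_le_one₀ (by positivity) h)]

/-- weighted number of stops over all scales -/
def pvD (t θ θ' : ℝ) (L N : ℕ) (f g : ℕ → ℝ) : ℝ :=
  ∑ l ∈ Finset.range L, (2:ℝ) ^ (-(t * l)) *
    (pvCnt (fun i => f i / (2:ℝ) ^ (-(θ * l))) (fun i => g i / (2:ℝ) ^ (-(θ' * l))) N : ℝ)

lemma pv_path (t θ θ' : ℝ) (ht : 0 < t) (hθ : θ + θ' = 1) (L N : ℕ) (f g : ℕ → ℝ)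
    (nk : ℕ → ℕ) (hnk : ∀ k, nk k ≤ nk (k+1)) (K : ℕ) (hK : nk K ≤ N)
    (hsmall : ∀ k < K, (∑ j ∈ Finset.Ico (nk k) (nk (k+1)),
      ∑ i ∈ Finset.Ico (nk k) j, f i * g j) = 0 ∨
      ∃ l < L, 4 * (2:ℝ) ^ (-(l:ℝ)) < |∑ j ∈ Finset.Ico (nk k) (nk (k+1)),
      ∑ i ∈ Finset.Ico (nk k) j, f i * g j|)
    (hD : pvD t θ θ' L N f g < 1) :
    ∑ k ∈ Finset.range K, |∑ j ∈ Finset.Ico (nk k) (nk (k+1)),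
      ∑ i ∈ Finset.Ico (nk k) j, f i * g j| ^ t ≤ 8 ^ t := by
  classical
  set v : ℕ → ℝ := fun k => |∑ j ∈ Finset.Ico (nk k) (nk (k+1)),
      ∑ i ∈ Finset.Ico (nk k) j, f i * g j| with hv
  set c : ℕ → ℕ := fun l => pvCnt (fun i => f i / (2:ℝ) ^ (-(θ * l)))
    (fun i => g i / (2:ℝ) ^ (-(θ' * l))) N with hc
  have hcount : ∀ l : ℕ, ∑ k ∈ Finset.range K, (if 4 * (2:ℝ) ^ (-(l:ℝ)) < v k then 1 else 0)
      ≤ c l := fun l => by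
    refine le_trans (le_trans (le_of_eq ?_) (pv_count (fun i => f i / (2:ℝ) ^ (-(θ * l)))
      (fun i => g i / (2:ℝ) ^ (-(θ' * l))) nk hnk K)) (pvCnt_mono _ _ hK)
    refine Finset.sum_congr rfl fun k _ => ?_
    have e : ∑ j ∈ Finset.Ico (nk k) (nk (k+1)), ∑ i ∈ Finset.Ico (nk k) j,
        f i / (2:ℝ) ^ (-(θ * l)) * (g j / (2:ℝ) ^ (-(θ' * l)))
        = (∑ j ∈ Finset.Ico (nk k) (nk (k+1)), ∑ i ∈ Finset.Ico (nk k) j, f i * g j)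
          / (2:ℝ) ^ (-(l:ℝ)) := by
      rw [Finset.sum_div]
      refine Finset.sum_congr rfl fun j _ => ?_
      rw [Finset.sum_div]
      refine Finset.sum_congr rfl fun i _ => ?_
      rw [div_mul_div_comm, ← Real.rpow_add (by norm_num)]
      congr 2
      rw [← neg_add, ← add_mul, hθ, one_mul]
    rw [e, abs_div, abs_of_pos (by positivity : (0:ℝ) < (2:ℝ) ^ (-(l:ℝ)))]
    congr 1
    rw [lt_div_iff₀ (by positivity)]
  have hDeq : pvD t θ θ' L N f g = ∑ l ∈ Finset.range L, (2:ℝ) ^ (-(t * l)) * (c l : ℝ) := rfl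
  have hv4 : ∀ k < K, (∃ l < L, 4 * (2:ℝ) ^ (-(l:ℝ)) < v k) → v k ≤ 4 := fun k hk ⟨l, hl, _⟩ => by
    by_contra hcon
    push Not at hcon
    have h1 := hcount 0
    have h2 : 1 ≤ ∑ k ∈ Finset.range K, (if 4 * (2:ℝ) ^ (-((0:ℕ):ℝ)) < v k then 1 else 0) := by
      refine le_trans (le_of_eq ?_) (Finset.single_le_sum (fun _ _ => Nat.zero_le _)
        (Finset.mem_range.2 hk))
      rw [if_pos]; simpa using hcon
    have h3 : (1:ℝ) ≤ c 0 := by exact_mod_cast h2.trans h1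
    have h4 : (2:ℝ) ^ (-(t * (0:ℕ))) * (c 0 : ℝ) ≤ pvD t θ θ' L N f g := by
      rw [hDeq]
      exact Finset.single_le_sum (f := fun l : ℕ => (2:ℝ) ^ (-(t * l)) * (c l : ℝ))
        (fun _ _ => by positivity) (Finset.mem_range.2 (by omega))
    simp at h4
    linarith
  have hpt : ∀ k < K, v k ^ t ≤ 8 ^ t * ∑ l ∈ Finset.range L, (2:ℝ) ^ (-(t * l)) *
      (if 4 * (2:ℝ) ^ (-(l:ℝ)) < v k then 1 else 0) := fun k hk => by
    rcases hsmall k hk with h | h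
    · have : v k = 0 := by simp only [hv, h, abs_zero]
      rw [this, Real.zero_rpow ht.ne']
      refine mul_nonneg (by positivity) (Finset.sum_nonneg fun l _ => ?_)
      split_ifs <;> positivity
    · have h4 := hv4 k hk h
      obtain ⟨l0, hl0, hl0'⟩ := h
      have hex : ∃ l : ℕ, 4 * (2:ℝ) ^ (-(l:ℝ)) < v k := ⟨l0, hl0'⟩
      set l := Nat.find hex with hl
      have hls : 4 * (2:ℝ) ^ (-(l:ℝ)) < v k := Nat.find_spec hex
      have hlL : l < L := lt_of_le_of_lt (Nat.find_min' hex hl0') hl0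
      have hlpos : l ≠ 0 := by
        intro h0
        rw [h0] at hls
        simp at hls
        linarith
      obtain ⟨m, hm⟩ := Nat.exists_eq_succ_of_ne_zero hlpos
      have hmin : ¬ (4 * (2:ℝ) ^ (-(m:ℝ)) < v k) := Nat.find_min hex (by omega)
      have hv8 : v k ≤ 8 * (2:ℝ) ^ (-(l:ℝ)) := by
        refine (not_lt.1 hmin).trans (le_of_eq ?_)
        rw [hm]; push_cast
        rw [show -(m:ℝ) = -((m:ℝ)+1) + 1 by ring, Real.rpow_add (by norm_num)]
        norm_num; ring
      have : v k ^ t ≤ 8 ^ t * (2:ℝ) ^ (-(t * l)) := by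
        refine (Real.rpow_le_rpow (abs_nonneg _) hv8 ht.le).trans (le_of_eq ?_)
        rw [Real.mul_rpow (by norm_num) (by positivity), ← Real.rpow_mul (by norm_num)]
        congr 2; ring
      refine this.trans (mul_le_mul_of_nonneg_left ?_ (by positivity))
      refine le_trans (le_of_eq ?_) (Finset.single_le_sum (f := fun l : ℕ => (2:ℝ) ^ (-(t * l)) *
        (if 4 * (2:ℝ) ^ (-(l:ℝ)) < v k then 1 else 0)) (fun _ _ => ?_) (Finset.mem_range.2 hlL))
      · rw [if_pos hls, mul_one]
      · beta_reduce
        split_ifs <;> positivity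
  calc ∑ k ∈ Finset.range K, v k ^ t
      ≤ ∑ k ∈ Finset.range K, 8 ^ t * ∑ l ∈ Finset.range L, (2:ℝ) ^ (-(t * l)) *
      (if 4 * (2:ℝ) ^ (-(l:ℝ)) < v k then 1 else 0) :=
        Finset.sum_le_sum fun k hk => hpt k (Finset.mem_range.1 hk)
    _ = 8 ^ t * ∑ l ∈ Finset.range L, (2:ℝ) ^ (-(t * l)) *
      (∑ k ∈ Finset.range K, (if 4 * (2:ℝ) ^ (-(l:ℝ)) < v k then 1 else 0 : ℕ) : ℕ) := by
        rw [← Finset.mul_sum, Finset.sum_comm]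
        congr 1
        refine Finset.sum_congr rfl fun l _ => ?_
        rw [← Finset.mul_sum]
        push_cast
        rfl
    _ ≤ 8 ^ t * ∑ l ∈ Finset.range L, (2:ℝ) ^ (-(t * l)) * (c l : ℝ) := by
        refine mul_le_mul_of_nonneg_left (Finset.sum_le_sum fun l _ => ?_) (by positivity)
        exact mul_le_mul_of_nonneg_left (by exact_mod_cast hcount l) (by positivity)
    _ ≤ 8 ^ t := by
        rw [← hDeq]
        exact mul_le_of_le_one_right (by positivity) hD.le

/-- abstract Haar structure -/
structure PvFlip {Ω : Type} [MeasurableSpace Ω] (μ : Measure Ω) (f g : ℕ → Ω → ℝ)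
    (σ : ℕ → Ω → Ω) : Prop where
  measF : ∀ n, Measurable (f n)
  measG : ∀ n, Measurable (g n)
  mp : ∀ n, MeasurePreserving (σ n) μ μ
  invF : ∀ n, ∀ i < n, ∀ x, f i (σ n x) = f i x
  invG : ∀ n, ∀ i < n, ∀ x, g i (σ n x) = g i x
  flipF : ∀ n x, f n (σ n x) = - f n x
  flipG : ∀ n x, g n (σ n x) = - g n x

/-- admissible parameters -/
structure PvPar (r s t θ θ' : ℝ) : Prop where
  hr : 0 < r
  hs : 0 < s
  hr2 : r ≤ 2
  hs2 : s ≤ 2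
  ht : 0 < t
  hθ : 0 < θ
  hθ' : 0 < θ'
  hsum : θ + θ' = 1
  h1 : θ * r < t ∨ (t = θ * r ∧ r < 2)
  h2 : θ' * s < t ∨ (t = θ' * s ∧ s < 2)

lemma pv_prop1 (r s t θ θ' : ℝ) (hpar : PvPar r s t θ θ') (M : ℕ) :
    ∃ C : ℝ≥0, ∀ {Ω : Type} [MeasurableSpace Ω] (μ : Measure Ω) (f g : ℕ → Ω → ℝ)
      (σ : ℕ → Ω → Ω) (_ : PvFlip μ f g σ) (L N : ℕ),
      μ {ω | 1 ≤ pvD t θ θ' L N (fun i => f i ω) (fun i => g i ω)} ≤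
        C * ∫⁻ ω, ENNReal.ofReal ((∑ n ∈ Finset.range N, |f n ω| ^ r
          + ∑ n ∈ Finset.range N, |g n ω| ^ s) ^ (M+1)) ∂μ := by
  obtain ⟨hr, hs, hr2, hs2, ht, hθ, hθ', hsum, h1, h2⟩ := hpar
  have h1' : θ * r ≤ t := by rcases h1 with h | h; exacts [h.le, h.1.ge]
  have h2' : θ' * s ≤ t := by rcases h2 with h | h; exacts [h.le, h.1.ge]
  obtain ⟨X1, hX1, hX1'⟩ := pv_sumX θ r t hθ hr hr2 h1
  obtain ⟨X2, hX2, hX2'⟩ := pv_sumX θ' s t hθ' hs hs2 h2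
  obtain ⟨T1, hT1, hT1'⟩ := pv_sumT θ r t hθ hr hr2 h1'
  obtain ⟨T2, hT2, hT2'⟩ := pv_sumT θ' s t hθ' hs hs2 h2'
  obtain ⟨CB, hCB⟩ := pv_burk M
  set CX := X1 + 2 * X2 with hCX
  set CV := 32 * T1 + 32 * T2 with hCV
  refine ⟨Real.toNNReal ((2*CX)^(M+1)) + Real.toNNReal (2^(2*(M+1))) * CB *
    Real.toNNReal (CV^(M+1)), ?_⟩
  intro Ω _ μ f g σ hfl L N
  set μl : ℕ → ℝ := fun l => (2:ℝ) ^ (-(θ * l)) with hμl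
  set νl : ℕ → ℝ := fun l => (2:ℝ) ^ (-(θ' * l)) with hνl
  have hμ0 : ∀ l, 0 < μl l := fun l => by simp only [hμl]; positivity
  have hν0 : ∀ l, 0 < νl l := fun l => by simp only [hνl]; positivity
  set St : ℕ → ℕ → Ω → ℝ × ℝ × ℝ := fun l n ω =>
    pvSt (fun i => f i ω / μl l) (fun i => g i ω / νl l) n with hSt
  set d : ℕ → Ω → ℝ := fun n ω => ∑ l ∈ Finset.range L, (2:ℝ) ^ (-(t * l)) *
    pvInc (St l n ω) (f n ω / μl l) (g n ω / νl l) with hd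
  set A : Ω → ℝ := fun ω => ∑ n ∈ Finset.range N, |f n ω| ^ r with hA
  set B : Ω → ℝ := fun ω => ∑ n ∈ Finset.range N, |g n ω| ^ s with hB
  have hA0 : ∀ ω, 0 ≤ A ω := fun ω => Finset.sum_nonneg fun n _ => by positivity
  have hB0 : ∀ ω, 0 ≤ B ω := fun ω => Finset.sum_nonneg fun n _ => by positivity
  have hdm : ∀ n, Measurable (d n) := fun n => by
    simp only [hd]
    refine Finset.measurable_sum _ fun l _ => ?_
    refine Measurable.const_mul ?_ _
    exact pvInc_meas (fun i ω => f i ω / μl l) (fun i ω => g i ω / νl l)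
      (fun i => (hfl.measF i).div_const _) (fun i => (hfl.measG i).div_const _) n
  have hSinv : ∀ n i l ω, i ≤ n → St l i (σ n ω) = St l i ω := fun n i l ω hi => by
    simp only [hSt]
    refine pvSt_congr _ _ _ _ _ (fun j hj => ?_) (fun j hj => ?_)
    · rw [hfl.invF n j (by omega)]
    · rw [hfl.invG n j (by omega)]
  have hdinv : ∀ n, ∀ i < n, ∀ x, d i (σ n x) = d i x := fun n i hi x => by
    simp only [hd]
    refine Finset.sum_congr rfl fun l _ => ?_
    rw [hSinv n i l x hi.le, hfl.invF n i hi, hfl.invG n i hi]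
  have hdflip : ∀ n x, d n (σ n x) = - d n x := fun n x => by
    simp only [hd]
    rw [← Finset.sum_neg_distrib]
    refine Finset.sum_congr rfl fun l _ => ?_
    rw [hSinv n n l x le_rfl, hfl.flipF, hfl.flipG, neg_div, neg_div, pvInc_neg, mul_neg]
  have hburk := hCB μ d σ hdm hfl.mp hdinv hdflip N
  -- bound for the square function
  have hVle : ∀ ω, ∑ n ∈ Finset.range N, (d n ω)^2 ≤ CV * (A ω + B ω) := fun ω => by
    have hn : ∀ n, (d n ω)^2 ≤ 32 * T1 * |f n ω| ^ r + 32 * T2 * |g n ω| ^ s := fun n => by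
      set p1 := ∑ l ∈ Finset.range L, (2:ℝ) ^ (-(t * l)) * min 1 (|f n ω| / μl l) with hp1
      set p2 := ∑ l ∈ Finset.range L, (2:ℝ) ^ (-(t * l)) * min 1 (|g n ω| / νl l) with hp2
      have hb : |d n ω| ≤ 4 * p1 + 4 * p2 := by
        simp only [hd]
        refine (Finset.abs_sum_le_sum_abs _ _).trans ?_
        rw [hp1, hp2, Finset.mul_sum, Finset.mul_sum, ← Finset.sum_add_distrib]
        refine Finset.sum_le_sum fun l _ => ?_
        rw [abs_mul, abs_of_pos (by positivity : (0:ℝ) < (2:ℝ) ^ (-(t * l)))]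
        have hb := pvSt_bdd (fun i => f i ω / μl l) (fun i => g i ω / νl l) n
        have := pvInc_bound (St l n ω) hb.1 hb.2.1 hb.2.2 (f n ω / μl l) (g n ω / νl l)
        rw [abs_div, abs_div, abs_of_pos (hμ0 l), abs_of_pos (hν0 l)] at this
        have h3 := mul_le_mul_of_nonneg_left this
          (by positivity : (0:ℝ) ≤ (2:ℝ) ^ (-(t * l)))
        linarith
      have q1 : p1^2 ≤ T1 * |f n ω| ^ r := hT1' _ (abs_nonneg _) L
      have q2 : p2^2 ≤ T2 * |g n ω| ^ s := hT2' _ (abs_nonneg _) L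
      have hsq : (d n ω)^2 ≤ (4*p1+4*p2)^2 := by
        rw [← sq_abs]; exact pow_le_pow_left₀ (abs_nonneg _) hb 2
      nlinarith [sq_nonneg (p1 - p2)]
    refine (Finset.sum_le_sum fun n _ => hn n).trans ?_
    rw [Finset.sum_add_distrib, ← Finset.mul_sum, ← Finset.mul_sum]
    have := hA0 ω
    have := hB0 ω
    change 32 * T1 * A ω + 32 * T2 * B ω ≤ _
    rw [hCV]
    nlinarith
  have hDle : ∀ ω, pvD t θ θ' L N (fun i => f i ω) (fun i => g i ω) ≤
      CX * (A ω + B ω) + ∑ n ∈ Finset.range N, d n ω := fun ω => by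
    have h3 : pvD t θ θ' L N (fun i => f i ω) (fun i => g i ω) ≤
        ∑ l ∈ Finset.range L, (2:ℝ) ^ (-(t * l)) *
        (∑ n ∈ Finset.range N, (min 1 ((f n ω / μl l)^2) + 2 * min 1 ((g n ω / νl l)^2))
      + ∑ n ∈ Finset.range N, pvInc (St l n ω) (f n ω / μl l) (g n ω / νl l)) := by
      refine Finset.sum_le_sum fun l _ => mul_le_mul_of_nonneg_left ?_ (by positivity)
      have := pv_energy (fun i => f i ω / μl l) (fun i => g i ω / νl l) N
      refine le_trans ?_ this
      refine le_add_of_nonneg_right ?_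
      simp only [pvE]; positivity
    refine h3.trans ?_
    simp only [mul_add, Finset.sum_add_distrib, Finset.mul_sum]
    refine add_le_add ?_ (le_of_eq ?_)
    · rw [Finset.sum_comm (s := Finset.range L), Finset.sum_comm (s := Finset.range L)]
      have ea : ∑ n ∈ Finset.range N, ∑ l ∈ Finset.range L, (2:ℝ) ^ (-(t * l)) *
          min 1 ((f n ω / μl l)^2) ≤ X1 * A ω := by
        simp only [hA, Finset.mul_sum]
        refine Finset.sum_le_sum fun n _ => ?_
        refine le_trans (le_of_eq ?_) (hX1' _ (abs_nonneg (f n ω)) L)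
        refine Finset.sum_congr rfl fun l _ => ?_
        rw [div_pow, div_pow, sq_abs]
      have eb : ∑ n ∈ Finset.range N, ∑ l ∈ Finset.range L, (2:ℝ) ^ (-(t * l)) *
          (2 * min 1 ((g n ω / νl l)^2)) ≤ 2 * X2 * B ω := by
        simp only [hB, Finset.mul_sum]
        refine Finset.sum_le_sum fun n _ => ?_
        have := hX2' _ (abs_nonneg (g n ω)) L
        rw [mul_assoc]
        refine le_trans (le_of_eq ?_) (mul_le_mul_of_nonneg_left this zero_le_two)
        rw [Finset.mul_sum]
        refine Finset.sum_congr rfl fun l _ => ?_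
        rw [div_pow, div_pow, sq_abs]; ring
      refine (add_le_add ea eb).trans ?_
      have := hA0 ω
      have := hB0 ω
      rw [hCX, ← mul_add]
      nlinarith
    · rw [Finset.sum_comm]
  set F1 : Ω → ℝ≥0∞ := fun ω => ENNReal.ofReal ((2*CX)^(M+1)) *
    ENNReal.ofReal ((A ω + B ω)^(M+1)) with hF1
  set F2 : Ω → ℝ≥0∞ := fun ω => ENNReal.ofReal (2^(2*(M+1))) *
    ENNReal.ofReal ((∑ n ∈ Finset.range N, d n ω)^(2*(M+1))) with hF2
  have hTm : Measurable (fun ω => ∑ n ∈ Finset.range N, d n ω) :=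
    Finset.measurable_sum _ fun n _ => hdm n
  have hAm : Measurable A := Finset.measurable_sum _ fun n _ => by
    have := hfl.measF n; fun_prop
  have hBm : Measurable B := Finset.measurable_sum _ fun n _ => by
    have := hfl.measG n; fun_prop
  have hF1m : Measurable F1 :=
    (((hAm.add hBm).pow_const _).ennreal_ofReal).const_mul _
  have hF2m : Measurable F2 := ((hTm.pow_const _).ennreal_ofReal).const_mul _
  have hsub : {ω | 1 ≤ pvD t θ θ' L N (fun i => f i ω) (fun i => g i ω)} ⊆
      {ω | 1 ≤ F1 ω + F2 ω} := fun ω hω => by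
    have hω : 1 ≤ pvD t θ θ' L N (fun i => f i ω) (fun i => g i ω) := hω
    have h4 := hω.trans (hDle ω)
    change (1:ℝ≥0∞) ≤ F1 ω + F2 ω
    rcases le_total 1 (2 * CX * (A ω + B ω)) with h | h
    · refine le_trans ?_ le_self_add
      simp only [hF1]
      rw [← ENNReal.ofReal_mul (by positivity), ← mul_pow, ENNReal.one_le_ofReal]
      exact one_le_pow₀ h
    · refine le_trans ?_ le_add_self
      simp only [hF2]
      rw [← ENNReal.ofReal_mul (by positivity), ← mul_pow, ENNReal.one_le_ofReal]
      exact one_le_pow₀ (by linarith)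
  have hm := mul_meas_ge_le_lintegral (μ := μ) (hF1m.add hF2m) 1
  rw [one_mul] at hm
  refine (measure_mono hsub).trans (hm.trans ?_)
  have e : ∫⁻ ω, (F1 + F2) ω ∂μ = ∫⁻ ω, F1 ω ∂μ + ∫⁻ ω, F2 ω ∂μ := lintegral_add_left hF1m _
  have hABm : Measurable (fun ω => ENNReal.ofReal ((A ω + B ω)^(M+1))) :=
    ((hAm.add hBm).pow_const _).ennreal_ofReal
  have e1 : ∫⁻ ω, F1 ω ∂μ = ENNReal.ofReal ((2*CX)^(M+1)) *
    ∫⁻ ω, ENNReal.ofReal ((A ω + B ω)^(M+1)) ∂μ := lintegral_const_mul _ hABm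
  have e2 : ∫⁻ ω, F2 ω ∂μ = ENNReal.ofReal (2^(2*(M+1))) *
    ∫⁻ ω, ENNReal.ofReal ((∑ n ∈ Finset.range N, d n ω)^(2*(M+1))) ∂μ :=
    lintegral_const_mul _ (hTm.pow_const _).ennreal_ofReal
  rw [e, e1, e2]
  have hV2 : ∫⁻ x, ENNReal.ofReal ((∑ n ∈ Finset.range N, (d n x)^2)^(M+1)) ∂μ ≤
      ENNReal.ofReal (CV^(M+1)) * ∫⁻ ω, ENNReal.ofReal ((A ω + B ω)^(M+1)) ∂μ := by
    rw [← lintegral_const_mul _ hABm]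
    refine lintegral_mono fun ω => ?_
    rw [← ENNReal.ofReal_mul (by positivity), ← mul_pow]
    refine ENNReal.ofReal_le_ofReal (pow_le_pow_left₀ ?_ (hVle ω) _)
    exact Finset.sum_nonneg fun n _ => sq_nonneg _
  push_cast
  rw [add_mul]
  refine add_le_add le_rfl ?_
  rw [mul_assoc, mul_assoc]
  refine mul_le_mul_right ?_ _
  exact hburk.trans (mul_le_mul_right hV2 _)

lemma pv_trunc_sum (a : ℕ → ℝ) (ha : ∀ n, 0 ≤ a n) (N : ℕ) :
    ∑ n ∈ Finset.range N, (if ∑ i ∈ Finset.range (n+1), a i ≤ 1 then a n else 0)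
      ≤ min 1 (∑ n ∈ Finset.range N, a n) := by
  have h1 : ∀ N, ∑ n ∈ Finset.range N, (if ∑ i ∈ Finset.range (n+1), a i ≤ 1 then a n else 0)
      ≤ ∑ n ∈ Finset.range N, a n := fun N => Finset.sum_le_sum fun n _ => by
    split_ifs
    · exact le_rfl
    · exact ha n
  refine le_min ?_ (h1 N)
  induction N with
  | zero => simp
  | succ N ih =>
    by_cases h : ∑ i ∈ Finset.range (N+1), a i ≤ 1
    · exact (h1 _).trans h
    · rw [Finset.sum_range_succ, if_neg h, add_zero]; exact ih

/-- truncated family -/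
def pvTr {Ω : Type} (r : ℝ) (f : ℕ → Ω → ℝ) (n : ℕ) (ω : Ω) : ℝ :=
  if ∑ i ∈ Finset.range (n+1), |f i ω| ^ r ≤ 1 then f n ω else 0

lemma pvTr_meas {Ω : Type} [MeasurableSpace Ω] (r : ℝ) (f : ℕ → Ω → ℝ)
    (hf : ∀ n, Measurable (f n)) (n : ℕ) : Measurable (pvTr r f n) := by
  refine Measurable.ite ?_ (hf n) measurable_const
  refine measurableSet_le (Finset.measurable_sum _ fun i _ => ?_) measurable_const
  have := hf i
  fun_prop

lemma pvTr_sum {Ω : Type} (r : ℝ) (hr : 0 < r) (f : ℕ → Ω → ℝ) (N : ℕ) (ω : Ω) :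
    ∑ n ∈ Finset.range N, |pvTr r f n ω| ^ r ≤ min 1 (∑ n ∈ Finset.range N, |f n ω| ^ r) := by
  refine le_trans (le_of_eq ?_) (pv_trunc_sum (fun n => |f n ω| ^ r) (fun n => by positivity) N)
  refine Finset.sum_congr rfl fun n _ => ?_
  simp only [pvTr]
  split_ifs
  · rfl
  · rw [abs_zero, Real.zero_rpow hr.ne']

lemma pvTr_eq {Ω : Type} (r : ℝ) (f : ℕ → Ω → ℝ) (N : ℕ) (ω : Ω)
    (h : ∑ n ∈ Finset.range N, |f n ω| ^ r ≤ 1) (n : ℕ) (hn : n < N) : pvTr r f n ω = f n ω := by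
  rw [pvTr, if_pos]
  refine le_trans (Finset.sum_le_sum_of_subset_of_nonneg ?_ fun i _ _ => by positivity) h
  exact Finset.range_mono (by omega)

lemma pvTr_inv {Ω : Type} (r : ℝ) (f : ℕ → Ω → ℝ) (n : ℕ) (x y : Ω)
    (h : ∀ i ≤ n, |f i x| = |f i y|) : 
    (∑ i ∈ Finset.range (n+1), |f i x| ^ r ≤ 1 ↔ ∑ i ∈ Finset.range (n+1), |f i y| ^ r ≤ 1) := by
  rw [Finset.sum_congr rfl fun i hi => by rw [h i (by simpa [Nat.lt_succ_iff] using hi)]]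

lemma pvFlip_tr {Ω : Type} [MeasurableSpace Ω] (μ : Measure Ω) (f g : ℕ → Ω → ℝ)
    (σ : ℕ → Ω → Ω) (h : PvFlip μ f g σ) (r s : ℝ) :
    PvFlip μ (pvTr r f) (pvTr s g) σ where
  measF := pvTr_meas r f h.measF
  measG := pvTr_meas s g h.measG
  mp := h.mp
  invF n i hi x := by
    simp only [pvTr]
    rw [h.invF n i hi]
    simp only [pvTr_inv r f i (σ n x) x (fun j hj => by rw [h.invF n j (by omega)])]
  invG n i hi x := by
    simp only [pvTr]
    rw [h.invG n i hi]
    simp only [pvTr_inv s g i (σ n x) x (fun j hj => by rw [h.invG n j (by omega)])]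
  flipF n x := by
    simp only [pvTr]
    rw [h.flipF n]
    simp only [pvTr_inv r f n (σ n x) x (fun j hj => by
      rcases hj.lt_or_eq with h' | h'
      · rw [h.invF n j h']
      · rw [h', h.flipF, abs_neg])]
    split_ifs <;> simp
  flipG n x := by
    simp only [pvTr]
    rw [h.flipG n]
    simp only [pvTr_inv s g n (σ n x) x (fun j hj => by
      rcases hj.lt_or_eq with h' | h'
      · rw [h.invG n j h']
      · rw [h', h.flipG, abs_neg])]
    split_ifs <;> simp

lemma pvCnt_congr (x y x' y' : ℕ → ℝ) (N : ℕ) (hx : ∀ i < N, x i = x' i)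
    (hy : ∀ i < N, y i = y' i) : pvCnt x y N = pvCnt x' y' N := by
  refine Finset.sum_congr rfl fun n hn => ?_
  have hn := Finset.mem_range.1 hn
  rw [pvSt_congr x y x' y' n (fun i hi => hx i (by omega)) (fun i hi => hy i (by omega)),
    hx n hn, hy n hn]

lemma pvD_congr (t θ θ' : ℝ) (L N : ℕ) (x y x' y' : ℕ → ℝ) (hx : ∀ i < N, x i = x' i)
    (hy : ∀ i < N, y i = y' i) : pvD t θ θ' L N x y = pvD t θ θ' L N x' y' := by
  refine Finset.sum_congr rfl fun l _ => ?_
  rw [pvCnt_congr _ _ _ _ N (fun i hi => by rw [hx i hi]) (fun i hi => by rw [hy i hi])]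

lemma pv_prop2 (r s t θ θ' : ℝ) (hpar : PvPar r s t θ θ') (M : ℕ) :
    ∃ C : ℝ≥0, ∀ {Ω : Type} [MeasurableSpace Ω] (μ : Measure Ω) (f g : ℕ → Ω → ℝ)
      (σ : ℕ → Ω → Ω) (_ : PvFlip μ f g σ) (L N : ℕ),
      μ {ω | 1 ≤ pvD t θ θ' L N (fun i => f i ω) (fun i => g i ω)} ≤
        C * ∫⁻ ω, (ENNReal.ofReal ((min 1 (∑ n ∈ Finset.range N, |f n ω| ^ r))^(M+1))
          + ENNReal.ofReal ((min 1 (∑ n ∈ Finset.range N, |g n ω| ^ s)) ^ (M+1))) ∂μ := by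
  obtain ⟨C, hC⟩ := pv_prop1 r s t θ θ' hpar M
  refine ⟨C * 2^M + 1, ?_⟩
  intro Ω _ μ f g σ hfl L N
  have h1 := hC μ _ _ σ (pvFlip_tr μ f g σ hfl r s) L N
  set A : Ω → ℝ := fun ω => min 1 (∑ n ∈ Finset.range N, |f n ω| ^ r) with hA
  set B : Ω → ℝ := fun ω => min 1 (∑ n ∈ Finset.range N, |g n ω| ^ s) with hB
  have hA0 : ∀ ω, 0 ≤ A ω := fun ω =>
    le_min zero_le_one (Finset.sum_nonneg fun n _ => by positivity)
  have hB0 : ∀ ω, 0 ≤ B ω := fun ω =>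
    le_min zero_le_one (Finset.sum_nonneg fun n _ => by positivity)
  have hAm : Measurable A := measurable_const.min (Finset.measurable_sum _ fun n _ => by
    have := hfl.measF n; fun_prop)
  have hBm : Measurable B := measurable_const.min (Finset.measurable_sum _ fun n _ => by
    have := hfl.measG n; fun_prop)
  set G : Ω → ℝ≥0∞ := fun ω => ENNReal.ofReal (A ω ^ (M+1)) + ENNReal.ofReal (B ω ^ (M+1)) with hG
  have hGm : Measurable G := by
    have h2 := (hAm.pow_const (M+1)).ennreal_ofReal
    have h3 := (hBm.pow_const (M+1)).ennreal_ofReal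
    exact h2.add h3
  have hsub : {ω | 1 ≤ pvD t θ θ' L N (fun i => f i ω) (fun i => g i ω)} ⊆
      {ω | 1 ≤ pvD t θ θ' L N (fun i => pvTr r f i ω) (fun i => pvTr s g i ω)} ∪
        {ω | 1 ≤ G ω} := fun ω hω => by
    by_cases ha : ∑ n ∈ Finset.range N, |f n ω| ^ r ≤ 1
    · by_cases hb : ∑ n ∈ Finset.range N, |g n ω| ^ s ≤ 1
      · left
        have hω : 1 ≤ pvD t θ θ' L N (fun i => f i ω) (fun i => g i ω) := hω
        change 1 ≤ pvD t θ θ' L N (fun i => pvTr r f i ω) (fun i => pvTr s g i ω)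
        rwa [pvD_congr t θ θ' L N _ _ (fun i => f i ω) (fun i => g i ω)
          (pvTr_eq r f N ω ha) (pvTr_eq s g N ω hb)]
      · right
        have : B ω = 1 := min_eq_left (not_le.1 hb).le
        change 1 ≤ G ω
        simp [hG, this]
    · right
      have : A ω = 1 := min_eq_left (not_le.1 ha).le
      change 1 ≤ G ω
      simp [hG, this]
  refine (measure_mono hsub).trans ((measure_union_le _ _).trans ?_)
  push_cast
  rw [add_mul, one_mul]
  refine add_le_add ?_ ?_
  · refine h1.trans ?_
    rw [mul_assoc]
    refine mul_le_mul_right ?_ _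
    rw [← lintegral_const_mul _ hGm]
    refine lintegral_mono fun ω => ?_
    have e : ENNReal.ofReal ((∑ n ∈ Finset.range N, |pvTr r f n ω| ^ r
          + ∑ n ∈ Finset.range N, |pvTr s g n ω| ^ s) ^ (M+1)) ≤
        ENNReal.ofReal (2^M * (A ω ^ (M+1) + B ω ^ (M+1))) := by
      refine ENNReal.ofReal_le_ofReal ?_
      refine (pow_le_pow_left₀ ?_ (add_le_add (pvTr_sum r hpar.hr f N ω)
        (pvTr_sum s hpar.hs g N ω)) _).trans (add_pow_le (hA0 ω) (hB0 ω) (M+1))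
      exact add_nonneg (Finset.sum_nonneg fun n _ => by positivity)
        (Finset.sum_nonneg fun n _ => by positivity)
    refine e.trans (le_of_eq ?_)
    rw [ENNReal.ofReal_mul (by positivity), ENNReal.ofReal_add (pow_nonneg (hA0 ω) _)
      (pow_nonneg (hB0 ω) _), ENNReal.ofReal_pow (by norm_num)]
    simp [hG]
  · have := mul_meas_ge_le_lintegral (μ := μ) hGm 1
    rwa [one_mul] at this

lemma pv_mem_dyadic (i m : ℤ) (x : ℝ) : x ∈ dyadicInterval i m ↔ ⌊(2:ℝ)^i * x⌋ = m := by
  rw [Int.floor_eq_iff, dyadicInterval, Set.mem_Ico, zpow_neg, ← div_eq_mul_inv, ← div_eq_mul_inv,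
    div_le_iff₀ (by positivity), lt_div_iff₀ (by positivity), mul_comm x]

/-- the dyadic flip at level `i` -/
def pvSig (i : ℤ) (x : ℝ) : ℝ :=
  if Even ⌊(2:ℝ)^i * x⌋ then x + (2:ℝ)^(-i) else x - (2:ℝ)^(-i)

lemma pv_floor_add (i : ℤ) (x : ℝ) : ⌊(2:ℝ)^i * (x + (2:ℝ)^(-i))⌋ = ⌊(2:ℝ)^i * x⌋ + 1 := by
  rw [mul_add, ← zpow_add₀ (by norm_num)]; simp

lemma pv_floor_sub (i : ℤ) (x : ℝ) : ⌊(2:ℝ)^i * (x - (2:ℝ)^(-i))⌋ = ⌊(2:ℝ)^i * x⌋ - 1 := by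
  rw [mul_sub, ← zpow_add₀ (by norm_num)]; simp

lemma pv_evenSet (i : ℤ) : MeasurableSet {x : ℝ | Even ⌊(2:ℝ)^i * x⌋} := by
  have : Measurable (fun x : ℝ => ⌊(2:ℝ)^i * x⌋) := (measurable_id.const_mul _).floor
  exact this (MeasurableSet.of_discrete (s := {m : ℤ | Even m}))

lemma pvSig_meas (i : ℤ) : Measurable (pvSig i) :=
  Measurable.ite (pv_evenSet i) (measurable_id.add_const _) (measurable_id.sub_const _)

lemma pvSig_mp (i : ℤ) : MeasurePreserving (pvSig i) volume volume := by
  refine ⟨pvSig_meas i, ?_⟩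
  ext s hs
  rw [Measure.map_apply (pvSig_meas i) hs]
  set E := {x : ℝ | Even ⌊(2:ℝ)^i * x⌋} with hE
  have hEm : MeasurableSet E := pv_evenSet i
  rw [← measure_inter_add_sdiff (pvSig i ⁻¹' s) hEm, ← measure_inter_add_sdiff s hEm, add_comm]
  congr 1
  · rw [← measure_preimage_add_right volume (-(2:ℝ)^(-i)) (s ∩ E)]
    simp only [← sub_eq_add_neg]
    congr 1
    ext x
    have h1 : x - (2:ℝ)^(-i) ∈ E ↔ x ∉ E := by
      simp only [hE, Set.mem_ofPred_eq, pv_floor_sub, Int.even_sub_one]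
    simp only [Set.mem_sdiff, Set.mem_preimage, Set.mem_inter_iff, h1]
    refine and_congr_left fun hx => ?_
    have hx' : ¬ Even ⌊(2:ℝ)^i * x⌋ := hx
    rw [pvSig, if_neg hx']
  · rw [← measure_preimage_add_right volume ((2:ℝ)^(-i)) (s \ E)]
    congr 1
    ext x
    have h1 : x + (2:ℝ)^(-i) ∈ E ↔ x ∉ E := by
      simp only [hE, Set.mem_ofPred_eq, pv_floor_add, Int.even_add_one]
    simp only [Set.mem_sdiff, Set.mem_preimage, Set.mem_inter_iff, h1, not_not]
    refine and_congr_left fun hx => ?_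
    have hx' : Even ⌊(2:ℝ)^i * x⌋ := hx
    rw [pvSig, if_pos hx']

lemma pv_floor_lower (i i' : ℤ) (h : i' ≤ i) (x : ℝ) :
    ⌊(2:ℝ)^i' * x⌋ = ⌊(2:ℝ)^i * x⌋ / ((2 ^ (i - i').toNat : ℕ) : ℤ) := by
  obtain ⟨n, hn⟩ := Int.eq_ofNat_of_zero_le (sub_nonneg.2 h)
  rw [← Int.floor_div_natCast, hn]
  congr 1
  have : i' = i - n := by omega
  rw [this, zpow_sub₀ (by norm_num)]
  push_cast
  simp
  ring

lemma pvSig_lower (i i' : ℤ) (h : i' < i) (x : ℝ) :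
    ⌊(2:ℝ)^i' * pvSig i x⌋ = ⌊(2:ℝ)^i' * x⌋ := by
  have key : ⌊(2:ℝ)^(i-1) * pvSig i x⌋ = ⌊(2:ℝ)^(i-1) * x⌋ := by
    rw [pv_floor_lower i (i-1) (by omega), pv_floor_lower i (i-1) (by omega) x]
    have : (i - (i-1)).toNat = 1 := by omega
    rw [this, pvSig]
    split_ifs with he
    · rw [pv_floor_add]; rw [Int.even_iff] at he; push_cast; omega
    · rw [pv_floor_sub]; rw [Int.even_iff] at he; push_cast; omega
  rw [pv_floor_lower (i-1) i' (by omega), key, ← pv_floor_lower (i-1) i' (by omega)]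

lemma pv_lp_const (f : ℤ → ℝ → ℝ) (hf : IsDiscLPFamily f) (i : ℤ) (x y : ℝ)
    (h : ⌊(2:ℝ)^i * x⌋ = ⌊(2:ℝ)^i * y⌋) : f i x = f i y :=
  hf.2.1 i _ x ((pv_mem_dyadic i _ x).2 h) y ((pv_mem_dyadic i _ y).2 rfl)

lemma pv_lp_meas (f : ℤ → ℝ → ℝ) (hf : IsDiscLPFamily f) (i : ℤ) : Measurable (f i) := by
  have h1 : Measurable (fun x : ℝ => ⌊(2:ℝ)^i * x⌋) := (measurable_id.const_mul _).floor
  have h2 : Measurable (fun m : ℤ => f i ((m:ℝ) * (2:ℝ)^(-i))) := Measurable.of_discrete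
  have : f i = (fun m : ℤ => f i ((m:ℝ) * (2:ℝ)^(-i))) ∘ (fun x : ℝ => ⌊(2:ℝ)^i * x⌋) := by
    ext x
    refine pv_lp_const f hf i _ _ ?_
    rw [mul_comm _ ((2:ℝ)^(-i)), ← mul_assoc, ← zpow_add₀ (by norm_num)]
    simp
  rw [this]
  exact h2.comp h1

lemma pv_lp_pair (f : ℤ → ℝ → ℝ) (hf : IsDiscLPFamily f) (i k : ℤ) (y z : ℝ)
    (hy : ⌊(2:ℝ)^i * y⌋ = 2 * k) (hz : ⌊(2:ℝ)^i * z⌋ = 2 * k + 1) : f i z = - f i y := by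
  have hD : dyadicInterval (i-1) k = dyadicInterval i (2*k) ∪ dyadicInterval i (2*k+1) := by
    ext x
    simp only [Set.mem_union, pv_mem_dyadic]
    rw [pv_floor_lower i (i-1) (by omega)]
    have : (i - (i-1)).toNat = 1 := by omega
    rw [this]; push_cast; omega
  have hdisj : Disjoint (dyadicInterval i (2*k)) (dyadicInterval i (2*k+1)) := by
    rw [Set.disjoint_left]
    intro x h1 h2
    rw [pv_mem_dyadic] at h1 h2
    omega
  have hm : ∀ m, MeasurableSet (dyadicInterval i m) := fun m => measurableSet_Ico
  have hIntOn : ∀ m, IntegrableOn (f i) (dyadicInterval i m) := fun m =>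
    ((hf.1 i).integrableOn_isCompact isCompact_Icc).mono_set Set.Ico_subset_Icc_self
  have hval : ∀ m w, ⌊(2:ℝ)^i * w⌋ = m → ∫ x in dyadicInterval i m, f i x = (2:ℝ)^(-i) * f i w := by
    intro m w hw
    rw [setIntegral_congr_fun (hm m) (g := fun _ => f i w)
      (fun x hx => pv_lp_const f hf i x w (by rw [(pv_mem_dyadic i m x).1 hx, hw]))]
    rw [setIntegral_const, dyadicInterval, Real.volume_real_Ico_of_le, smul_eq_mul]
    · ring
    · have : (0:ℝ) < 2^(-i) := by positivity
      nlinarith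
  have h0 := hf.2.2 i k
  rw [hD, setIntegral_union hdisj (hm _) (hIntOn _) (hIntOn _), hval _ y hy, hval _ z hz,
    ← mul_add] at h0
  have : (2:ℝ)^(-i) ≠ 0 := by positivity
  have := (mul_eq_zero.1 h0).resolve_left this
  linarith

lemma pv_lp_flip (f : ℤ → ℝ → ℝ) (hf : IsDiscLPFamily f) (i : ℤ) (x : ℝ) :
    f i (pvSig i x) = - f i x := by
  rw [pvSig]
  split_ifs with he
  · obtain ⟨k, hk⟩ := even_iff_two_dvd.1 he
    exact pv_lp_pair f hf i k _ _ hk (by rw [pv_floor_add, hk])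
  · obtain ⟨k, hk⟩ := Int.not_even_iff_odd.1 he
    have := pv_lp_pair f hf i k (x - 2^(-i)) x (by rw [pv_floor_sub, hk]; ring) hk
    linarith

lemma pv_lp_PvFlip (f g : ℤ → ℝ → ℝ) (hf : IsDiscLPFamily f) (hg : IsDiscLPFamily g) (L : ℕ) :
    PvFlip volume (fun n : ℕ => f ((n:ℤ) - L)) (fun n : ℕ => g ((n:ℤ) - L))
      (fun n : ℕ => pvSig ((n:ℤ) - L)) where
  measF _ := pv_lp_meas f hf _
  measG _ := pv_lp_meas g hg _
  mp _ := pvSig_mp _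
  invF _ _ hi x := pv_lp_const f hf _ _ _ (pvSig_lower _ _ (by omega) x)
  invG _ _ hi x := pv_lp_const g hg _ _ _ (pvSig_lower _ _ (by omega) x)
  flipF _ x := pv_lp_flip f hf _ x
  flipG _ x := pv_lp_flip g hg _ x

/-- one block of the paraproduct -/
def pvPi (f g : ℤ → ℝ → ℝ) (Nk : ℕ → ℝ → ℤ) (k : ℕ) (x : ℝ) : ℝ :=
  ∑ j ∈ Finset.Ioc (Nk k x) (Nk (k + 1) x), ∑ i ∈ Finset.Ioo (Nk k x) j, f i x * g j x

/-- the power sum -/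
def pvA (r : ℝ) (f : ℤ → ℝ → ℝ) (x : ℝ) : ℝ≥0∞ := ∑' i : ℤ, (ENNReal.ofReal |f i x|) ^ r

lemma pv_reindex (f g : ℤ → ℝ) (a b : ℤ) (L : ℕ) (ha : -(L:ℤ) - 1 ≤ a) :
    ∑ j ∈ Finset.Ico (a + L + 1).toNat (b + L + 1).toNat,
      ∑ i ∈ Finset.Ico (a + L + 1).toNat j, f ((i:ℤ) - L) * g ((j:ℤ) - L)
    = ∑ j ∈ Finset.Ioc a b, ∑ i ∈ Finset.Ioo a j, f i * g j := by
  refine Finset.sum_bij' (fun (j:ℕ) _ => (j:ℤ) - L) (fun (j:ℤ) _ => (j + L).toNat) ?_ ?_ ?_ ?_ ?_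
  · intro j hj
    simp only [Finset.mem_Ico, Finset.mem_Ioc] at hj ⊢
    omega
  · intro j hj
    simp only [Finset.mem_Ico, Finset.mem_Ioc] at hj ⊢
    omega
  · intro j hj
    simp only [Finset.mem_Ico] at hj
    omega
  · intro j hj
    simp only [Finset.mem_Ioc] at hj
    omega
  · intro j hj
    simp only [Finset.mem_Ico] at hj
    refine Finset.sum_bij' (fun (j:ℕ) _ => (j:ℤ) - L) (fun (j:ℤ) _ => (j + L).toNat) ?_ ?_ ?_ ?_ ?_
    · intro i hi
      simp only [Finset.mem_Ico, Finset.mem_Ioo] at hi ⊢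
      omega
    · intro i hi
      simp only [Finset.mem_Ico, Finset.mem_Ioo] at hi ⊢
      omega
    · intro i hi
      simp only [Finset.mem_Ico] at hi
      omega
    · intro i hi
      simp only [Finset.mem_Ioo] at hi
      omega
    · intro i hi
      rfl

lemma pv_window (r : ℝ) (hr : 0 < r) (f : ℤ → ℝ → ℝ) (L N M : ℕ) (x : ℝ) :
    ENNReal.ofReal ((min 1 (∑ n ∈ Finset.range N, |f ((n:ℤ) - L) x| ^ r))^(M+1)) ≤
      (min 1 (pvA r f x)) ^ (M+1) := by
  have h0 : 0 ≤ ∑ n ∈ Finset.range N, |f ((n:ℤ) - L) x| ^ r :=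
    Finset.sum_nonneg fun n _ => by positivity
  rw [ENNReal.ofReal_pow (le_min zero_le_one h0)]
  refine pow_le_pow_left₀ (zero_le) ?_ _
  refine le_min ?_ ?_
  · exact ENNReal.ofReal_le_one.2 (min_le_left _ _)
  · refine (ENNReal.ofReal_le_ofReal (min_le_right _ _)).trans ?_
    rw [ENNReal.ofReal_sum_of_nonneg fun n _ => by positivity]
    have : ∀ n ∈ Finset.range N, ENNReal.ofReal (|f ((n:ℤ) - L) x| ^ r) =
        (fun i : ℤ => (ENNReal.ofReal |f i x|) ^ r) ((fun n : ℕ => (n:ℤ) - L) n) := fun n _ => by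
      rw [← ENNReal.ofReal_rpow_of_nonneg (abs_nonneg _) hr.le]
    rw [Finset.sum_congr rfl this]
    refine (ENNReal.sum_le_tsum _).trans ?_
    exact ENNReal.tsum_comp_le_tsum_of_injective (f := fun n : ℕ => (n:ℤ) - L)
      (fun a b h => by simpa using h) _

lemma pv_prop3 (r s t θ θ' : ℝ) (hpar : PvPar r s t θ θ') (M : ℕ) :
    ∃ C : ℝ≥0, ∀ (f g : ℤ → ℝ → ℝ), IsDiscLPFamily f → IsDiscLPFamily g →
      ∀ (Nk : ℕ → ℝ → ℤ), (∀ (k : ℕ) (x : ℝ), Nk k x ≤ Nk (k + 1) x) →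
      volume {x | ENNReal.ofReal (8 ^ t) < ∑' k : ℕ, (ENNReal.ofReal |pvPi f g Nk k x|) ^ t} ≤
        C * ∫⁻ x, ((min 1 (pvA r f x)) ^ (M+1) + (min 1 (pvA s g x)) ^ (M+1)) := by
  obtain ⟨C, hC⟩ := pv_prop2 r s t θ θ' hpar M
  refine ⟨C, ?_⟩
  intro f g hf hg Nk hN
  set EL : ℕ → Set ℝ := fun L => {x | 1 ≤ pvD t θ θ' L (2*L+2) (fun n => f ((n:ℤ) - L) x)
    (fun n => g ((n:ℤ) - L) x)} with hEL
  have hELm : ∀ L, volume (EL L) ≤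
      C * ∫⁻ x, ((min 1 (pvA r f x)) ^ (M+1) + (min 1 (pvA s g x)) ^ (M+1)) := fun L => by
    refine (hC volume _ _ _ (pv_lp_PvFlip f g hf hg L) L (2*L+2)).trans ?_
    refine mul_le_mul_right (lintegral_mono fun x => ?_) _
    exact add_le_add (pv_window r hpar.hr f L _ M x) (pv_window s hpar.hs g L _ M x)
  have hsub : {x | ENNReal.ofReal (8 ^ t) < ∑' k : ℕ, (ENNReal.ofReal |pvPi f g Nk k x|) ^ t} ⊆
      ⋃ L0 : ℕ, ⋂ L ≥ L0, EL L := fun x hx => by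
    have hx : ENNReal.ofReal (8 ^ t) < ∑' k : ℕ, (ENNReal.ofReal |pvPi f g Nk k x|) ^ t := hx
    rw [ENNReal.tsum_eq_iSup_nat, lt_iSup_iff] at hx
    obtain ⟨K, hK⟩ := hx
    have hK' : (8:ℝ)^t < ∑ k ∈ Finset.range K, |pvPi f g Nk k x| ^ t := by
      rw [Finset.sum_congr rfl fun k _ => ENNReal.ofReal_rpow_of_nonneg (abs_nonneg _) hpar.ht.le,
        ← ENNReal.ofReal_sum_of_nonneg fun n _ => by positivity] at hK
      exact (ENNReal.ofReal_lt_ofReal_iff_of_nonneg (by positivity)).1 hK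
    have hev : ∀ᶠ L : ℕ in Filter.atTop, ∀ k ∈ Finset.range (K+1),
        -(L:ℤ) - 1 ≤ Nk k x ∧ Nk k x ≤ L ∧ (pvPi f g Nk k x = 0 ∨
          ∃ l < L, 4 * (2:ℝ) ^ (-(l:ℝ)) < |pvPi f g Nk k x|) := by
      rw [Filter.eventually_all_finset]
      intro k _
      have h3 : ∀ᶠ L : ℕ in Filter.atTop, (pvPi f g Nk k x = 0 ∨
          ∃ l < L, 4 * (2:ℝ) ^ (-(l:ℝ)) < |pvPi f g Nk k x|) := by
        by_cases h0 : pvPi f g Nk k x = 0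
        · exact Filter.Eventually.of_forall fun _ => Or.inl h0
        · obtain ⟨l, hl⟩ := exists_pow_lt_of_lt_one (y := (1/2:ℝ))
            (x := |pvPi f g Nk k x| / 4) (by positivity) (by norm_num)
          filter_upwards [Filter.eventually_gt_atTop l] with L hL
          refine Or.inr ⟨l, hL, ?_⟩
          rw [Real.rpow_neg (by norm_num), Real.rpow_natCast, ← inv_pow]
          rw [one_div] at hl
          linarith
      filter_upwards [h3, Filter.eventually_ge_atTop (Nk k x).natAbs] with L h3 h4
      exact ⟨by omega, by omega, h3⟩
    rw [Filter.eventually_atTop] at hev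
    obtain ⟨L0, hL0⟩ := hev
    refine Set.mem_iUnion.2 ⟨L0, Set.mem_iInter₂.2 fun L hL => ?_⟩
    have hh := hL0 L hL
    by_contra hcon
    have hD : pvD t θ θ' L (2*L+2) (fun n => f ((n:ℤ) - L) x)
      (fun n => g ((n:ℤ) - L) x) < 1 := not_le.1 hcon
    have hre : ∀ k < K, ∑ j ∈ Finset.Ico (Nk k x + L + 1).toNat (Nk (k+1) x + L + 1).toNat,
      ∑ i ∈ Finset.Ico (Nk k x + L + 1).toNat j, f ((i:ℤ) - L) x * g ((j:ℤ) - L) x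
        = pvPi f g Nk k x := fun k hk =>
      pv_reindex (fun i => f i x) (fun i => g i x) (Nk k x) (Nk (k+1) x) L
        (hh k (Finset.mem_range.2 (by omega))).1
    have := pv_path t θ θ' hpar.ht hpar.hsum L (2*L+2) (fun n => f ((n:ℤ) - L) x)
      (fun n => g ((n:ℤ) - L) x) (fun k => (Nk k x + L + 1).toNat)
      (fun k => by have := hN k x; omega) K
      (by have := (hh K (Finset.mem_range.2 (by omega))).2.1; omega)
      (fun k hk => by
        rw [hre k hk]; exact (hh k (Finset.mem_range.2 (by omega))).2.2) hD
    rw [Finset.sum_congr rfl fun k hk => by rw [hre k (Finset.mem_range.1 hk)]] at this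
    linarith
  refine (measure_mono hsub).trans ?_
  rw [Monotone.measure_iUnion]
  · refine iSup_le fun L0 => le_trans (measure_mono ?_) (hELm L0)
    exact Set.iInter₂_subset L0 le_rfl
  · intro a b hab
    exact Set.iInter₂_mono' fun L hL => ⟨L, le_trans hab hL, subset_rfl⟩

lemma pv_lp_scale (f : ℤ → ℝ → ℝ) (hf : IsDiscLPFamily f) (c : ℝ) :
    IsDiscLPFamily (fun i x => c * f i x) := by
  refine ⟨fun i => (hf.1 i).smul c, fun i m x hx y hy => ?_, fun i m => ?_⟩
  · beta_reduce
    rw [hf.2.1 i m x hx y hy]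
  · rw [integral_const_mul, hf.2.2, mul_zero]

lemma pvPi_scale (f g : ℤ → ℝ → ℝ) (Nk : ℕ → ℝ → ℤ) (k : ℕ) (x : ℝ) (c d : ℝ) :
    pvPi (fun i x => c * f i x) (fun i x => d * g i x) Nk k x = c * d * pvPi f g Nk k x := by
  simp only [pvPi, Finset.mul_sum]
  refine Finset.sum_congr rfl fun j _ => Finset.sum_congr rfl fun i _ => ?_
  ring

/-- t-th power of the variation -/
def pvZ (t : ℝ) (f g : ℤ → ℝ → ℝ) (Nk : ℕ → ℝ → ℤ) (x : ℝ) : ℝ≥0∞ :=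
  ∑' k : ℕ, (ENNReal.ofReal |pvPi f g Nk k x|) ^ t

lemma pvZ_scale (t : ℝ) (ht : 0 < t) (f g : ℤ → ℝ → ℝ) (Nk : ℕ → ℝ → ℤ) (x : ℝ) (c d : ℝ)
    (hc : 0 ≤ c) (hd : 0 ≤ d) :
    pvZ t (fun i x => c * f i x) (fun i x => d * g i x) Nk x =
      (ENNReal.ofReal (c * d)) ^ t * pvZ t f g Nk x := by
  simp only [pvZ, pvPi_scale]
  rw [← ENNReal.tsum_mul_left]
  refine tsum_congr fun k => ?_
  rw [abs_mul, abs_of_nonneg (mul_nonneg hc hd), ENNReal.ofReal_mul (mul_nonneg hc hd),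
    ENNReal.mul_rpow_of_nonneg _ _ ht.le]

lemma pvA_scale (r : ℝ) (hr : 0 < r) (f : ℤ → ℝ → ℝ) (x : ℝ) (c : ℝ) (hc : 0 ≤ c) :
    pvA r (fun i x => c * f i x) x = (ENNReal.ofReal c) ^ r * pvA r f x := by
  simp only [pvA]
  rw [← ENNReal.tsum_mul_left]
  refine tsum_congr fun k => ?_
  rw [abs_mul, abs_of_nonneg hc, ENNReal.ofReal_mul hc, ENNReal.mul_rpow_of_nonneg _ _ hr.le]

lemma pvA_meas (r : ℝ) (f : ℤ → ℝ → ℝ) (hf : IsDiscLPFamily f) : Measurable (pvA r f) := by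
  refine Measurable.tsum fun i => ?_
  have := pv_lp_meas f hf i
  fun_prop

lemma pv_geo_enn (a δ : ℝ) (M : ℕ) (ha : 0 < a) (hab : a < (M:ℝ) + 1) (hδ : 0 < δ) :
    ∃ C : ℝ≥0, ∀ A : ℝ≥0∞, ∑' n : ℤ, ENNReal.ofReal ((2:ℝ) ^ (δ * a * n)) *
      (min 1 (ENNReal.ofReal ((2:ℝ) ^ (-(δ * n))) * A)) ^ (M+1) ≤ C * A ^ a := by
  obtain ⟨C, hC, hC'⟩ := pv_geo a (M+1) δ ha hab hδ
  refine ⟨C.toNNReal, fun A => ?_⟩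
  by_cases hA : A = ⊤
  · rw [hA, ENNReal.top_rpow_of_pos ha, ENNReal.mul_top]
    · exact le_top
    · simpa using hC
  · rw [ENNReal.tsum_eq_iSup_sum]
    refine iSup_le fun S => ?_
    set x := A.toReal with hx
    have hAx : A = ENNReal.ofReal x := (ENNReal.ofReal_toReal hA).symm
    have hx0 : 0 ≤ x := ENNReal.toReal_nonneg
    have h := ENNReal.ofReal_le_ofReal (hC' x hx0 S)
    rw [ENNReal.ofReal_mul hC.le, ← ENNReal.ofReal_rpow_of_nonneg hx0 ha.le, ← hAx,
      ENNReal.ofReal_sum_of_nonneg (fun n _ => by positivity)] at h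
    refine le_trans (le_of_eq ?_) h
    refine Finset.sum_congr rfl fun n _ => ?_
    rw [ENNReal.ofReal_mul (by positivity), ← Real.rpow_mul (by norm_num)]
    congr 1
    · congr 2; ring
    · rw [hAx, ← ENNReal.ofReal_mul (by positivity), ← ENNReal.ofReal_one, ← ENNReal.ofReal_min,
        ← ENNReal.ofReal_pow (by positivity)]
      congr 1
      rw [show ((M:ℝ)+1) = ((M+1:ℕ):ℝ) by push_cast; ring, Real.rpow_natCast, Real.rpow_neg (by norm_num),
        div_eq_inv_mul]

lemma pv_layer (u : ℝ) (hu : 0 < u) (W : ℝ≥0∞) (P : ℤ → Prop)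
    (hP : ∀ n : ℤ, ENNReal.ofReal (8 * (2:ℝ) ^ (n:ℝ)) < W → P n) :
    ∀ c : ℤ → ℝ≥0∞, (∀ n, P n → ENNReal.ofReal (16 ^ u * (2:ℝ) ^ (u * n)) ≤ c n) →
    W ^ u ≤ ∑' n : ℤ, c n := by
  intro c hc
  have key : ∀ n : ℤ, ENNReal.ofReal (8 * (2:ℝ) ^ (n:ℝ)) < W →
      ENNReal.ofReal (8 * (2:ℝ) ^ ((n:ℝ)+1)) ^ u ≤ ∑' n : ℤ, c n := fun n hn => by
    refine le_trans (le_trans (le_of_eq ?_) (hc n (hP n hn))) (ENNReal.le_tsum n)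
    rw [ENNReal.ofReal_rpow_of_nonneg (by positivity) hu.le]
    congr 1
    rw [Real.rpow_add (by norm_num), Real.rpow_one,
      show 8 * ((2:ℝ) ^ (n:ℝ) * 2) = 16 * (2:ℝ) ^ (n:ℝ) by ring,
      Real.mul_rpow (by norm_num) (by positivity), ← Real.rpow_mul (by norm_num), mul_comm u]
  by_cases h0 : W = 0
  · rw [h0, ENNReal.zero_rpow_of_pos hu]; exact zero_le
  by_cases hT : W = ⊤
  · rw [hT, ENNReal.top_rpow_of_pos hu]
    by_contra hcon
    push Not at hcon
    obtain ⟨m, hm⟩ := ENNReal.exists_nat_gt (ENNReal.rpow_ne_top_of_nonneg (y := 1/u)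
      (by positivity) hcon.ne)
    have h1 := key m (by rw [hT]; exact ENNReal.ofReal_lt_top)
    have h2 := ENNReal.rpow_le_rpow h1 (by positivity : 0 ≤ 1/u)
    rw [← ENNReal.rpow_mul, mul_one_div_cancel hu.ne', ENNReal.rpow_one] at h2
    have h3 : (m : ℝ≥0∞) ≤ ENNReal.ofReal (8 * (2:ℝ) ^ (((m:ℤ):ℝ)+1)) := by
      rw [← ENNReal.ofReal_natCast]
      refine ENNReal.ofReal_le_ofReal ?_
      have h4 : (m:ℝ) ≤ (2:ℝ)^m := by exact_mod_cast (Nat.lt_two_pow_self).le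
      rw [Real.rpow_add (by norm_num), Int.cast_natCast, Real.rpow_natCast, Real.rpow_one]
      have : (0:ℝ) < 2^m := by positivity
      linarith
    exact absurd (hm.trans_le (h3.trans h2)) (lt_irrefl _)
  · have hw : 0 < W.toReal := ENNReal.toReal_pos h0 hT
    obtain ⟨n, hn1, hn2⟩ := exists_mem_Ioc_zpow (x := W.toReal / 8) (y := (2:ℝ))
      (by positivity) (by norm_num)
    have h1 : ENNReal.ofReal (8 * (2:ℝ) ^ (n:ℝ)) < W := by
      rw [ENNReal.ofReal_lt_iff_lt_toReal (by positivity) hT, Real.rpow_intCast]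
      linarith
    refine le_trans (ENNReal.rpow_le_rpow ?_ hu.le) (key n h1)
    rw [ENNReal.le_ofReal_iff_toReal_le hT (by positivity)]
    have : (2:ℝ)^((n:ℝ)+1) = (2:ℝ)^(n+1) := by
      rw [← Real.rpow_intCast]; push_cast; rfl
    rw [this]
    linarith

lemma pv_prop4 (p q r s t θ θ' : ℝ) (hp : 0 < p) (hq : 0 < q) (hpar : PvPar r s t θ θ') :
    ∃ C : ℝ≥0, ∀ (f g : ℤ → ℝ → ℝ), IsDiscLPFamily f → IsDiscLPFamily g →
      ∀ (Nk : ℕ → ℝ → ℤ), (∀ (k : ℕ) (x : ℝ), Nk k x ≤ Nk (k + 1) x) →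
      ∫⁻ x, ((pvZ t f g Nk x) ^ (1/t)) ^ (p * q / (p + q)) ≤
        C * ((∫⁻ x, ((pvA r f x) ^ (1/r)) ^ p) + (∫⁻ x, ((pvA s g x) ^ (1/s)) ^ q)) := by
  have hr := hpar.hr
  have hs := hpar.hs
  have ht := hpar.ht
  obtain ⟨M, hM⟩ := exists_nat_gt (max (p/r) (q/s))
  have hM1 : p / r < (M:ℝ) + 1 := by linarith [le_max_left (p/r) (q/s)]
  have hM2 : q / s < (M:ℝ) + 1 := by linarith [le_max_right (p/r) (q/s)]
  set u := p * q / (p + q) with hu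
  have hu0 : 0 < u := by positivity
  set α := q / (p + q) with hα
  set β := p / (p + q) with hβ
  have hα0 : 0 < α := by positivity
  have hβ0 : 0 < β := by positivity
  have hαβ : α + β = 1 := by rw [hα, hβ]; field_simp; ring
  obtain ⟨C3, hC3⟩ := pv_prop3 r s t θ θ' hpar M
  obtain ⟨G1, hG1⟩ := pv_geo_enn (p/r) (α*r) M (by positivity) hM1 (by positivity)
  obtain ⟨G2, hG2⟩ := pv_geo_enn (q/s) (β*s) M (by positivity) hM2 (by positivity)
  have hu1 : α * r * (p / r) = u := by rw [hα, hu]; field_simp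
  have hu2 : β * s * (q / s) = u := by rw [hβ, hu]; field_simp
  rw [hu1] at hG1
  rw [hu2] at hG2
  refine ⟨(16 ^ u : ℝ).toNNReal * C3 * (G1 + G2), ?_⟩
  intro f g hf hg Nk hN
  set c : ℤ → ℝ := fun n => (2:ℝ) ^ (-(α * n)) with hc
  set d : ℤ → ℝ := fun n => (2:ℝ) ^ (-(β * n)) with hd
  have hc0 : ∀ n, 0 < c n := fun n => by simp only [hc]; positivity
  have hd0 : ∀ n, 0 < d n := fun n => by simp only [hd]; positivity
  have hcd : ∀ n, c n * d n = (2:ℝ) ^ (-(n:ℝ)) := fun n => by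
    simp only [hc, hd]
    rw [← Real.rpow_add (by norm_num), ← neg_add, ← add_mul, hαβ, one_mul]
  set V : ℤ → Set ℝ := fun n => {x | ENNReal.ofReal (8 ^ t) <
    pvZ t (fun i x => c n * f i x) (fun i x => d n * g i x) Nk x} with hV
  set H : ℤ → ℝ → ℝ≥0∞ := fun n x =>
    (min 1 (ENNReal.ofReal ((2:ℝ) ^ (-(α * r * n))) * pvA r f x)) ^ (M+1) +
    (min 1 (ENNReal.ofReal ((2:ℝ) ^ (-(β * s * n))) * pvA s g x)) ^ (M+1) with hH
  have hAm := pvA_meas r f hf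
  have hBm := pvA_meas s g hg
  have hHm : ∀ n, Measurable (H n) := fun n => by
    have h1 : Measurable fun x => min 1 (ENNReal.ofReal ((2:ℝ) ^ (-(α * r * n))) * pvA r f x) :=
      measurable_const.min (hAm.const_mul _)
    have h2 : Measurable fun x => min 1 (ENNReal.ofReal ((2:ℝ) ^ (-(β * s * n))) * pvA s g x) :=
      measurable_const.min (hBm.const_mul _)
    exact (h1.pow_const _).add (h2.pow_const _)
  have hVm : ∀ n, volume (V n) ≤ C3 * ∫⁻ x, H n x := fun n => by
    refine (hC3 _ _ (pv_lp_scale f hf (c n)) (pv_lp_scale g hg (d n)) Nk hN).trans (le_of_eq ?_)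
    congr 1
    refine lintegral_congr fun x => ?_
    rw [pvA_scale r hr f x _ (hc0 n).le, pvA_scale s hs g x _ (hd0 n).le,
      ENNReal.ofReal_rpow_of_nonneg (hc0 n).le hr.le,
      ENNReal.ofReal_rpow_of_nonneg (hd0 n).le hs.le]
    simp only [hH, hc, hd]
    rw [← Real.rpow_mul (by norm_num), ← Real.rpow_mul (by norm_num)]
    congr 6 <;> ring
  set w : ℤ → ℝ≥0∞ := fun n => ENNReal.ofReal (16 ^ u * (2:ℝ) ^ (u * n)) with hw
  have hmemV : ∀ (n : ℤ) (x : ℝ), ENNReal.ofReal (8 * (2:ℝ) ^ (n:ℝ)) < (pvZ t f g Nk x) ^ (1/t) →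
      x ∈ V n := fun n x h => by
    change ENNReal.ofReal (8 ^ t) < _
    rw [pvZ_scale t ht f g Nk x _ _ (hc0 n).le (hd0 n).le, hcd]
    have h1 := ENNReal.rpow_lt_rpow h ht
    rw [← ENNReal.rpow_mul, one_div_mul_cancel ht.ne', ENNReal.rpow_one] at h1
    have h2 : ENNReal.ofReal (8 ^ t) = ENNReal.ofReal ((2:ℝ) ^ (-(n:ℝ))) ^ t *
        ENNReal.ofReal (8 * (2:ℝ) ^ (n:ℝ)) ^ t := by
      rw [← ENNReal.mul_rpow_of_nonneg _ _ ht.le, ← ENNReal.ofReal_mul (by positivity),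
        ENNReal.ofReal_rpow_of_nonneg (by positivity) ht.le]
      congr 2
      rw [mul_left_comm, ← Real.rpow_add (by norm_num)]
      simp
    rw [h2]
    refine (ENNReal.mul_lt_mul_iff_right ?_ ?_).2 h1
    · have : 0 < ENNReal.ofReal ((2:ℝ) ^ (-(n:ℝ))) := ENNReal.ofReal_pos.2 (by positivity)
      exact (ENNReal.rpow_pos this ENNReal.ofReal_ne_top).ne'
    · exact ENNReal.rpow_ne_top_of_nonneg ht.le ENNReal.ofReal_ne_top
  set V' : ℤ → Set ℝ := fun n => toMeasurable volume (V n) with hV'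
  have hpt : ∀ x, ((pvZ t f g Nk x) ^ (1/t)) ^ u ≤
      ∑' n : ℤ, (V' n).indicator (fun _ => w n) x := fun x => by
    refine pv_layer u hu0 _ (fun n => x ∈ V n) (fun n => hmemV n x) _ (fun n hn => ?_)
    rw [Set.indicator_of_mem (subset_toMeasurable volume (V n) hn)]
  have hpow : ∀ (a b : ℝ) (X : ℝ≥0∞), (X ^ (1/a)) ^ b = X ^ (b / a) := fun a b X => by
    rw [← ENNReal.rpow_mul]; congr 1; ring
  calc ∫⁻ x, ((pvZ t f g Nk x) ^ (1/t)) ^ u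
      ≤ ∫⁻ x, ∑' n : ℤ, (V' n).indicator (fun _ => w n) x := lintegral_mono hpt
    _ = ∑' n : ℤ, ∫⁻ x, (V' n).indicator (fun _ => w n) x :=
        lintegral_tsum fun n =>
          (measurable_const.indicator (measurableSet_toMeasurable _ _)).aemeasurable
    _ = ∑' n : ℤ, w n * volume (V n) := tsum_congr fun n => by
        rw [lintegral_indicator_const (measurableSet_toMeasurable _ _), measure_toMeasurable]
    _ ≤ ∑' n : ℤ, w n * (C3 * ∫⁻ x, H n x) :=
        ENNReal.tsum_le_tsum fun n => mul_le_mul_right (hVm n) _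
    _ = ∑' n : ℤ, ∫⁻ x, w n * C3 * H n x := tsum_congr fun n => by
        rw [lintegral_const_mul _ (hHm n), mul_assoc]
    _ = ∫⁻ x, ∑' n : ℤ, w n * C3 * H n x :=
        (lintegral_tsum fun n => ((hHm n).const_mul _).aemeasurable).symm
    _ ≤ ∫⁻ x, (ENNReal.ofReal (16^u) * C3 * (G1 + G2)) *
          (((pvA r f x) ^ (1/r)) ^ p + ((pvA s g x) ^ (1/s)) ^ q) := lintegral_mono fun x => by
        have e : ∀ n : ℤ, w n * C3 * H n x = ENNReal.ofReal (16^u) * C3 *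
            (ENNReal.ofReal ((2:ℝ) ^ (u * n)) *
              (min 1 (ENNReal.ofReal ((2:ℝ) ^ (-(α * r * n))) * pvA r f x)) ^ (M+1) +
             ENNReal.ofReal ((2:ℝ) ^ (u * n)) *
              (min 1 (ENNReal.ofReal ((2:ℝ) ^ (-(β * s * n))) * pvA s g x)) ^ (M+1)) :=
            fun n => by
          simp only [hw, hH]
          rw [ENNReal.ofReal_mul (by positivity)]; ring
        rw [tsum_congr e, ENNReal.tsum_mul_left, ENNReal.tsum_add, hpow, hpow, mul_assoc
          (ENNReal.ofReal (16^u) * C3)]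
        refine mul_le_mul_right ?_ _
        refine (add_le_add (hG1 _) (hG2 _)).trans ?_
        rw [mul_add]
        exact add_le_add (mul_le_mul_left le_self_add _) (mul_le_mul_left le_add_self _)
    _ = _ := by
        rw [lintegral_const_mul, lintegral_add_left]
        · push_cast; rfl
        · exact (hAm.pow_const _).pow_const _
        · exact ((hAm.pow_const _).pow_const _).add ((hBm.pow_const _).pow_const _)

lemma pv_mixed_eq (p r : ℝ) (f : ℤ → ℝ → ℝ) :
    mixedNorm p r f = (∫⁻ x : ℝ, ((pvA r f x) ^ (1 / r)) ^ p) ^ (1 / p) := rfl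

lemma pv_mixed_scale (p r : ℝ) (hp : 0 < p) (hr : 0 < r) (f : ℤ → ℝ → ℝ) (hf : IsDiscLPFamily f)
    (c : ℝ) (hc : 0 ≤ c) :
    mixedNorm p r (fun i x => c * f i x) = ENNReal.ofReal c * mixedNorm p r f := by
  rw [pv_mixed_eq, pv_mixed_eq]
  have : ∀ x, ((pvA r (fun i x => c * f i x) x) ^ (1 / r)) ^ p =
      (ENNReal.ofReal c) ^ p * ((pvA r f x) ^ (1 / r)) ^ p := fun x => by
    rw [pvA_scale r hr f x c hc, ENNReal.mul_rpow_of_nonneg _ _ (by positivity),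
      ENNReal.mul_rpow_of_nonneg _ _ hp.le, ← ENNReal.rpow_mul (ENNReal.ofReal c) r,
      mul_one_div_cancel hr.ne', ENNReal.rpow_one]
  rw [lintegral_congr this, lintegral_const_mul _ (((pvA_meas r f hf).pow_const _).pow_const _),
    ENNReal.mul_rpow_of_nonneg _ _ (by positivity), ← ENNReal.rpow_mul,
    mul_one_div_cancel hp.ne', ENNReal.rpow_one]

lemma pv_mixed_zero (p r : ℝ) (hp : 0 < p) (hr : 0 < r) (f : ℤ → ℝ → ℝ) (hf : IsDiscLPFamily f)
    (h : mixedNorm p r f = 0) : ∀ᵐ x : ℝ, ∀ i, f i x = 0 := by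
  rw [pv_mixed_eq, ENNReal.rpow_eq_zero_iff_of_pos (by positivity),
    lintegral_eq_zero_iff (((pvA_meas r f hf).pow_const _).pow_const _)] at h
  filter_upwards [h] with x hx i
  have hx : ((pvA r f x) ^ (1 / r)) ^ p = 0 := hx
  rw [ENNReal.rpow_eq_zero_iff_of_pos hp, ENNReal.rpow_eq_zero_iff_of_pos (by positivity), pvA,
    ENNReal.tsum_eq_zero] at hx
  have := hx i
  rw [ENNReal.rpow_eq_zero_iff_of_pos hr, ENNReal.ofReal_eq_zero] at this
  exact abs_eq_zero.1 (le_antisymm this (abs_nonneg _))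

lemma pv_lhs_zero (u t : ℝ) (hu : 0 < u) (ht : 0 < t) (f g : ℤ → ℝ → ℝ) (Nk : ℕ → ℝ → ℤ)
    (h : ∀ᵐ x : ℝ, ∀ i j, f i x * g j x = 0) :
    (∫⁻ x, ((pvZ t f g Nk x) ^ (1/t)) ^ u) ^ (1/u) = 0 := by
  rw [ENNReal.rpow_eq_zero_iff_of_pos (by positivity)]
  refine (lintegral_congr_ae (g := fun _ => 0) ?_).trans lintegral_zero
  filter_upwards [h] with x hx
  have : pvZ t f g Nk x = 0 := by
    simp [pvZ, pvPi, hx, ht]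
  rw [this, ENNReal.zero_rpow_of_pos (by positivity), ENNReal.zero_rpow_of_pos hu]

lemma pv_prop5 (p q r s t θ θ' : ℝ) (hp : 0 < p) (hq : 0 < q) (hpar : PvPar r s t θ θ') :
    ∃ C : ℝ≥0, 0 < C ∧ ∀ (f g : ℤ → ℝ → ℝ), IsDiscLPFamily f → IsDiscLPFamily g →
      ∀ (Nk : ℕ → ℝ → ℤ), (∀ (k : ℕ) (x : ℝ), Nk k x ≤ Nk (k + 1) x) →
      (∫⁻ x, ((pvZ t f g Nk x) ^ (1/t)) ^ (p * q / (p + q))) ^ (1 / (p * q / (p + q))) ≤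
        C * mixedNorm p r f * mixedNorm q s g := by
  obtain ⟨C, hC⟩ := pv_prop4 p q r s t θ θ' hp hq hpar
  have hr := hpar.hr
  have hs := hpar.hs
  have ht := hpar.ht
  set u := p * q / (p + q) with hu
  have hu0 : 0 < u := by positivity
  refine ⟨(C * 2) ^ (1/u) + 1, by positivity, ?_⟩
  intro f g hf hg Nk hN
  by_cases hf0 : mixedNorm p r f = 0
  · rw [pv_lhs_zero u t hu0 ht]
    · exact zero_le
    · filter_upwards [pv_mixed_zero p r hp hr f hf hf0] with x hx i j
      rw [hx, zero_mul]
  by_cases hg0 : mixedNorm q s g = 0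
  · rw [pv_lhs_zero u t hu0 ht]
    · exact zero_le
    · filter_upwards [pv_mixed_zero q s hq hs g hg hg0] with x hx i j
      rw [hx, mul_zero]
  have hCpos : (((C * 2) ^ (1/u) + 1 : ℝ≥0) : ℝ≥0∞) ≠ 0 := by
    have : (0:ℝ≥0) < (C * 2) ^ (1/u) + 1 := by positivity
    exact_mod_cast this.ne'
  by_cases hfT : mixedNorm p r f = ⊤
  · rw [hfT, ENNReal.mul_top hCpos, ENNReal.top_mul hg0]; exact le_top
  by_cases hgT : mixedNorm q s g = ⊤
  · rw [hgT, ENNReal.mul_top (mul_ne_zero hCpos hf0)]; exact le_top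
  set F := mixedNorm p r f with hF
  set G := mixedNorm q s g with hG
  have hFp : 0 < F.toReal := ENNReal.toReal_pos hf0 hfT
  have hGp : 0 < G.toReal := ENNReal.toReal_pos hg0 hgT
  set c := (F.toReal)⁻¹ with hc
  set d := (G.toReal)⁻¹ with hd
  have hc0 : 0 < c := by positivity
  have hd0 : 0 < d := by positivity
  have hcF : ENNReal.ofReal c * F = 1 := by
    rw [hc, ENNReal.ofReal_inv_of_pos hFp, ENNReal.ofReal_toReal hfT,
      ENNReal.inv_mul_cancel hf0 hfT]
  have hdG : ENNReal.ofReal d * G = 1 := by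
    rw [hd, ENNReal.ofReal_inv_of_pos hGp, ENNReal.ofReal_toReal hgT,
      ENNReal.inv_mul_cancel hg0 hgT]
  have h4 := hC _ _ (pv_lp_scale f hf c) (pv_lp_scale g hg d) Nk hN
  have hone : ∀ (a b : ℝ) (ha : 0 < a) (h : ℤ → ℝ → ℝ), mixedNorm a b h = 1 →
      ∫⁻ x : ℝ, ((pvA b h x) ^ (1 / b)) ^ a = 1 := fun a b ha h h1 => by
    rw [pv_mixed_eq] at h1
    have := congrArg (fun X : ℝ≥0∞ => X ^ a) h1
    simpa [← ENNReal.rpow_mul, inv_mul_cancel₀ ha.ne'] using this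
  rw [hone p r hp _ (by rw [pv_mixed_scale p r hp hr f hf c hc0.le]; exact hcF),
    hone q s hq _ (by rw [pv_mixed_scale q s hq hs g hg d hd0.le]; exact hdG)] at h4
  set κ : ℝ≥0∞ := ENNReal.ofReal (c * d) with hκ
  have hκ0 : κ ≠ 0 := (ENNReal.ofReal_pos.2 (by positivity)).ne'
  have hκT : κ ≠ ⊤ := ENNReal.ofReal_ne_top
  have h5 : ∫⁻ x, ((pvZ t (fun i x => c * f i x) (fun i x => d * g i x) Nk x) ^ (1/t)) ^ u
      = κ ^ u * ∫⁻ x, ((pvZ t f g Nk x) ^ (1/t)) ^ u := by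
    rw [← lintegral_const_mul' _ _ (ENNReal.rpow_ne_top_of_nonneg hu0.le hκT)]
    refine lintegral_congr fun x => ?_
    rw [pvZ_scale t ht f g Nk x c d hc0.le hd0.le,
      ENNReal.mul_rpow_of_nonneg _ _ (by positivity : 0 ≤ 1/t), ← ENNReal.rpow_mul,
      mul_one_div_cancel ht.ne', ENNReal.rpow_one, ENNReal.mul_rpow_of_nonneg _ _ hu0.le]
  rw [h5] at h4
  have h6 := ENNReal.rpow_le_rpow h4 (by positivity : 0 ≤ 1/u)
  rw [ENNReal.mul_rpow_of_nonneg _ _ (by positivity : 0 ≤ 1/u), ← ENNReal.rpow_mul,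
    mul_one_div_cancel hu0.ne', ENNReal.rpow_one, one_add_one_eq_two] at h6
  set I := (∫⁻ x, ((pvZ t f g Nk x) ^ (1/t)) ^ u) ^ (1/u) with hI
  have h7 : κ * (F * G) = 1 := by
    rw [hκ, ENNReal.ofReal_mul hc0.le]
    calc _ = (ENNReal.ofReal c * F) * (ENNReal.ofReal d * G) := by ring
      _ = 1 := by rw [hcF, hdG, one_mul]
  have h8 : ((C:ℝ≥0∞) * 2) ^ (1/u) ≤ (((C * 2) ^ (1/u) + 1 : ℝ≥0) : ℝ≥0∞) := by
    push_cast
    rw [ENNReal.coe_rpow_of_nonneg _ (by positivity)]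
    push_cast
    exact le_self_add
  calc I = (κ * I) * (F * G) := by
        calc I = (κ * (F * G)) * I := by rw [h7, one_mul]
          _ = _ := by ring
    _ ≤ (((C * 2) ^ (1/u) + 1 : ℝ≥0) : ℝ≥0∞) * (F * G) := mul_le_mul_left (h6.trans h8) _
    _ = _ := by rw [mul_assoc]

/-- Strong-type bilinear variational paraproduct estimate, discrete case
(containing the Friz–Victoir martingale inequality). -/
theorem bilinear_variational_paraproduct_discrete
    (p q r s t : ℝ) (hp : 1 < p) (hq : 1 < q)
    (hr1 : 1 ≤ r) (hr2 : r ≤ 2) (hs1 : 1 ≤ s) (hs2 : s ≤ 2)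
    (ht : 0 < t) (hts : 1 / t ≤ 1 / r + 1 / s)
    (hcase : max r s < 2 ∨ r * s / (r + s) < t) :
    ∃ C : ℝ≥0, 0 < C ∧
      ∀ (f g : ℤ → ℝ → ℝ), IsDiscLPFamily f → IsDiscLPFamily g →
      ∀ (Nk : ℕ → ℝ → ℤ), IsJumpCollection Nk →
      (∫⁻ x : ℝ,
          ((∑' k : ℕ, (ENNReal.ofReal
              |∑ j ∈ Finset.Ioc (Nk k x) (Nk (k + 1) x),
                ∑ i ∈ Finset.Ioo (Nk k x) j, f i x * g j x|) ^ t) ^ (1 / t))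
            ^ (p * q / (p + q))) ^ ((p + q) / (p * q))
        ≤ (C : ℝ≥0∞) * mixedNorm p r f * mixedNorm q s g := by
  have hr : 0 < r := by linarith
  have hs : 0 < s := by linarith
  have e1 : s / (r + s) * r = r * s / (r + s) := by ring
  have e2 : r / (r + s) * s = r * s / (r + s) := by ring
  have hle : r * s / (r + s) ≤ t := by
    have e : 1 / r + 1 / s = 1 / (r * s / (r + s)) := by field_simp; ring
    rw [e] at hts
    exact (one_div_le_one_div ht (by positivity)).1 hts
  have hpar : PvPar r s t (s / (r + s)) (r / (r + s)) := by
    refine ⟨hr, hs, hr2, hs2, ht, by positivity, by positivity, by field_simp; ring, ?_, ?_⟩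
    · rw [e1]
      rcases hle.lt_or_eq with h | h
      · exact Or.inl h
      · rcases hcase with h' | h'
        · exact Or.inr ⟨h.symm, (le_max_left _ _).trans_lt h'⟩
        · exact Or.inl h'
    · rw [e2]
      rcases hle.lt_or_eq with h | h
      · exact Or.inl h
      · rcases hcase with h' | h'
        · exact Or.inr ⟨h.symm, (le_max_right _ _).trans_lt h'⟩
        · exact Or.inl h'
  obtain ⟨C, hC, h⟩ := pv_prop5 p q r s t _ _ (by linarith) (by linarith) hpar
  refine ⟨C, hC, fun f g hf hg Nk hN => ?_⟩
  have := h f g hf hg Nk hN.2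
  rw [one_div_div] at this
  exact this

end
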